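/- arXiv:1906.05161 — 2 statements merged into one kernel-verified Lean document; each statement's English description precedes it below -/
import Mathlib

section
/- Fix p > 2 and k ∈ (0, d_p). There exist ρ₀ > 0 depending only on n, p, k, L, and c > 0 depending only on n, p, k, with the following property. Let ω ⊂ ℝⁿ be a bounded open set with C² boundary, a ∈ ∂ω and 0 < ρ ≤ ρ₀; set D = B_ρ(a) ∩ ω, assume the distance function δ(x) = dist(x, ∂ω) is C² on the closure of D with ‖Δδ‖_{L∞(D)} ≤ L. Let t₀ < t₁ and let v, its first and second spatial derivatives and its first time derivative be continuous on ω̄ × [t₀, t₁], with v_t − Δv ≤ |∇v|^p in ω × (t₀, t₁) and v = 0 on ∂ω × (t₀, t₁). If v(x,t) ≤ (1−β)^{−1} k δ(x)^{1−β} for all (x,t) ∈ D × (t₀, t₁), then for all b ∈ B_{ρ/2}(a) ∩ ∂ω and t ∈ (t₀, t₁): v_ν(b,t) = ∇v(b,t)·ν_b ≤ c ρ^{−1/(p−1)} ((t₁ − t₀ + ρ²)/(t − t₀))^{1/(p−2)}. -/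
/-!
With `m = 1 / (1 - β)`, the profile `m k δ^(1 - β)` has slope `k δ^(-β)`, whose `p`-th power
`k^p δ^(-β - 1)` is smaller than `-(k δ^(-β))' = k β δ^(-β - 1)` exactly because `k < β^β`. Hence
the profile is a strict supersolution, and stays one under small perturbations, among them the
curvature term `Δδ` when `ρ` is small. We perturb it to `m k ((δ + ρ ψ^m)^(1 - β) - ρ^(1 - β) ψ)`,
where the small cutoff `ψ` vanishes at time `t₀` and on the sphere of radius `ρ` and grows linearly
in time. This barrier vanishes on the boundary and equals the profile where `ψ = 0`, so it dominates
`v` by comparison. Where `ψ > 0`, concavity of `r^(1 - β)` bounds it by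
`k (ρ ψ^m)^(-β) δ = k ρ^(-β) ψ^(-1 / (p - 2)) δ`, and since `ψ` is at least a multiple of
`(t - t₀) / (t₁ - t₀ + ρ²)` on the half ball, the gradient bound follows.
-/

open Set Metric Filter RealInnerProductSpace

noncomputable section

/-- A set `Ω ⊆ ℝⁿ` has boundary of class `C²`: near each boundary point, `Ω` is the strict
sublevel set of a `C²` function with nonvanishing gradient (equivalently, after a rigid motion,
the boundary is locally the graph of a `C²` function with `Ω` strictly on one side). -/
def IsC2Boundary {n : ℕ} (Ω : Set (EuclideanSpace ℝ (Fin n))) : Prop :=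
  ∀ x ∈ frontier Ω, ∃ f : EuclideanSpace ℝ (Fin n) → ℝ, ∃ U ∈ nhds x,
    ContDiffOn ℝ 2 f U ∧ (∀ y ∈ U, fderiv ℝ f y ≠ 0) ∧
    U ∩ Ω = U ∩ {y | f y < 0} ∧ U ∩ frontier Ω = U ∩ {y | f y = 0}

open scoped Topology

/-- `f` is differentiable near `x`, and its first and second derivatives at `x` are `f₁` and `f₂`. It
is used for restrictions of functions to lines. -/
def HasSecondDerivAt (f : ℝ → ℝ) (f₁ f₂ x : ℝ) : Prop :=
  ∃ f' : ℝ → ℝ, (∀ᶠ y in 𝓝 x, HasDerivAt f (f' y) y) ∧ f' x = f₁ ∧ HasDerivAt f' f₂ x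

namespace HasSecondDerivAt

variable {f g : ℝ → ℝ} {f₁ f₂ g₁ g₂ x : ℝ}

theorem hasDerivAt (hf : HasSecondDerivAt f f₁ f₂ x) : HasDerivAt f f₁ x := by
  obtain ⟨f', hf', rfl, -⟩ := hf
  exact hf'.self_of_nhds

theorem congr_deriv (hf : HasSecondDerivAt f f₁ f₂ x) (h₁ : f₁ = g₁) (h₂ : f₂ = g₂) :
    HasSecondDerivAt f g₁ g₂ x :=
  h₁ ▸ h₂ ▸ hf

theorem add (hf : HasSecondDerivAt f f₁ f₂ x) (hg : HasSecondDerivAt g g₁ g₂ x) :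
    HasSecondDerivAt (fun y => f y + g y) (f₁ + g₁) (f₂ + g₂) x := by
  obtain ⟨f', hf', rfl, hf''⟩ := hf
  obtain ⟨g', hg', rfl, hg''⟩ := hg
  exact ⟨fun y => f' y + g' y, hf'.mp (hg'.mono fun y hgy hfy => hfy.add hgy), rfl, hf''.add hg''⟩

theorem const_mul (c : ℝ) (hf : HasSecondDerivAt f f₁ f₂ x) :
    HasSecondDerivAt (fun y => c * f y) (c * f₁) (c * f₂) x := by
  obtain ⟨f', hf', rfl, hf''⟩ := hf
  exact ⟨fun y => c * f' y, hf'.mono fun y hy => hy.const_mul c, rfl, hf''.const_mul c⟩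

theorem sub (hf : HasSecondDerivAt f f₁ f₂ x) (hg : HasSecondDerivAt g g₁ g₂ x) :
    HasSecondDerivAt (fun y => f y - g y) (f₁ - g₁) (f₂ - g₂) x := by
  simpa only [neg_one_mul, ← sub_eq_add_neg] using hf.add (hg.const_mul (-1))

theorem const_sub (c : ℝ) (hf : HasSecondDerivAt f f₁ f₂ x) :
    HasSecondDerivAt (fun y => c - f y) (-f₁) (-f₂) x := by
  obtain ⟨f', hf', rfl, hf''⟩ := hf
  exact ⟨fun y => -f' y, hf'.mono fun y hy => hy.const_sub c, rfl, hf''.neg⟩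

theorem comp (hg : HasSecondDerivAt g g₁ g₂ (f x)) (hf : HasSecondDerivAt f f₁ f₂ x) :
    HasSecondDerivAt (fun y => g (f y)) (g₁ * f₁) (g₂ * f₁ ^ 2 + g₁ * f₂) x := by
  have hcont : ContinuousAt f x := hf.hasDerivAt.continuousAt
  obtain ⟨f', hf', rfl, hf''⟩ := hf
  obtain ⟨g', hg', rfl, hg''⟩ := hg
  refine ⟨fun y => g' (f y) * f' y, ?_, rfl, ?_⟩
  · filter_upwards [hf', hcont.eventually hg'] with y hfy hgy using hgy.comp y hfy
  · exact ((hg''.comp x hf'.self_of_nhds).mul hf'').congr_deriv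
      (by simp only [Function.comp_apply]; ring)

theorem rpow_const (hf : HasSecondDerivAt f f₁ f₂ x) (hx : 0 < f x) (q : ℝ) :
    HasSecondDerivAt (fun y => f y ^ q) (q * f x ^ (q - 1) * f₁)
      (q * ((q - 1) * f x ^ (q - 2) * f₁ ^ 2 + f x ^ (q - 1) * f₂)) x := by
  have hpow : HasSecondDerivAt (fun y => y ^ q) (q * f x ^ (q - 1))
      (q * ((q - 1) * f x ^ (q - 1 - 1))) (f x) := by
    refine ⟨fun y => q * y ^ (q - 1), ?_, rfl, ?_⟩
    · filter_upwards [lt_mem_nhds hx] with y hy using Real.hasDerivAt_rpow_const (Or.inl hy.ne')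
    · exact (Real.hasDerivAt_rpow_const (Or.inl hx.ne')).const_mul q
  refine (hpow.comp hf).congr_deriv rfl ?_
  rw [show q - 1 - 1 = q - 2 by ring]
  ring

theorem sq (hf : HasSecondDerivAt f f₁ f₂ x) :
    HasSecondDerivAt (fun y => f y ^ 2) (2 * f x * f₁) (2 * (f₁ ^ 2 + f x * f₂)) x := by
  have hsq : HasSecondDerivAt (fun y => y ^ 2) (2 * f x) 2 (f x) :=
    ⟨fun y => 2 * y, .of_forall fun y => by simpa using hasDerivAt_pow 2 y, rfl,
      by simpa using (hasDerivAt_id (f x)).const_mul 2⟩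
  exact (hsq.comp hf).congr_deriv rfl (by ring)

theorem nonpos_of_isLocalMax (hf : HasSecondDerivAt f f₁ f₂ x) (hmax : IsLocalMax f x) :
    f₂ ≤ 0 := by
  obtain ⟨f', hf', rfl, hf''⟩ := hf
  have hderiv : deriv f =ᶠ[𝓝 x] f' := hf'.mono fun y hy => hy.deriv
  have hderiv₂ : deriv (deriv f) x = f₂ := hderiv.deriv_eq.trans hf''.deriv
  by_contra! hpos
  have hmin : IsLocalMin f x := isLocalMin_of_deriv_deriv_pos (hderiv₂.symm ▸ hpos)
    hmax.deriv_eq_zero hf'.self_of_nhds.continuousAt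
  have hconst : f =ᶠ[𝓝 x] fun _ => f x := by
    filter_upwards [hmax, hmin] with y hle hge using le_antisymm hle hge
  have hzero : deriv (deriv f) x = 0 := by simpa using hconst.deriv.deriv_eq
  exact hpos.ne' (hderiv₂ ▸ hzero)

theorem eq_and_le_of_isLocalMax_sub (hf : HasSecondDerivAt f f₁ f₂ x)
    (hg : HasSecondDerivAt g g₁ g₂ x) (hmax : IsLocalMax (fun y => f y - g y) x) :
    f₁ = g₁ ∧ f₂ ≤ g₂ :=
  ⟨sub_eq_zero.1 (hmax.hasDerivAt_eq_zero (hf.sub hg).hasDerivAt),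
    sub_nonpos.1 ((hf.sub hg).nonpos_of_isLocalMax hmax)⟩

theorem of_hasFDerivAt_line {E : Type*} [NormedAddCommGroup E] [NormedSpace ℝ E] {f : E → ℝ}
    {f' : E → E →L[ℝ] ℝ} {L : E →L[ℝ] ℝ} {x e : E} (hf : ∀ᶠ y in 𝓝 x, HasFDerivAt f (f' y) y)
    (hf' : HasFDerivAt (fun y => f' y e) L x) :
    HasSecondDerivAt (fun s => f (x + s • e)) (f' x e) (L e) 0 := by
  have hline (s : ℝ) : HasDerivAt (fun s : ℝ => x + s • e) e s := by
    simpa using ((hasDerivAt_id s).smul_const e).const_add x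
  have hx : x + (0 : ℝ) • e = x := by simp
  refine ⟨fun s => f' (x + s • e) e, ?_, by simp, ?_⟩
  · filter_upwards [(hline 0).continuousAt.eventually (hx.symm ▸ hf)] with s hs
      using hs.comp_hasDerivAt s (hline s)
  · exact (hx.symm ▸ hf' : HasFDerivAt (fun y => f' y e) L (x + (0 : ℝ) • e)).comp_hasDerivAt 0
      (hline 0)

theorem of_contDiffAt_line {E : Type*} [NormedAddCommGroup E] [InnerProductSpace ℝ E]
    [CompleteSpace E] {f : E → ℝ} {x : E} (hf : ContDiffAt ℝ 2 f x) (e : E) :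
    HasSecondDerivAt (fun s : ℝ => f (x + s • e)) ⟪gradient f x, e⟫
      (fderiv ℝ (fun y => fderiv ℝ f y e) x e) 0 := by
  have hderiv : ∀ᶠ y in 𝓝 x, HasFDerivAt f (fderiv ℝ f y) y :=
    (hf.eventually (by simp)).mono fun y hy => (hy.differentiableAt two_ne_zero).hasFDerivAt
  have hderiv₂ : DifferentiableAt ℝ (fun y => fderiv ℝ f y e) x :=
    ((hf.fderiv_right (m := 1) one_add_one_eq_two.le).differentiableAt one_ne_zero).clm_apply
      (differentiableAt_const e)
  refine (of_hasFDerivAt_line hderiv hderiv₂.hasFDerivAt).congr_deriv ?_ rfl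
  rw [gradient, InnerProductSpace.toDual_symm_apply]

end HasSecondDerivAt

section FirstOrder

variable {E : Type*} [NormedAddCommGroup E] [InnerProductSpace ℝ E]

theorem norm_eq_one_of_hasFDerivAt_infDist [ProperSpace E] {S : Set E} (hS : IsClosed S)
    (hne : S.Nonempty) {x : E} (hx : x ∉ S) {g : E →L[ℝ] ℝ}
    (hg : HasFDerivAt (fun y => infDist y S) g x) : ‖g‖ = 1 := by
  obtain ⟨y, hyS, hy⟩ := hS.exists_infDist_eq_dist hne x
  have hxy : x - y ≠ 0 := sub_ne_zero.2 fun h => hx (h ▸ hyS)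
  have hnorm : DifferentiableAt ℝ (fun z : E => ‖z‖) (x - y) :=
    (contDiffAt_norm ℝ hxy (n := 1)).differentiableAt one_ne_zero
  have hdist : HasFDerivAt (fun z => dist z y) (fderiv ℝ (fun z => ‖z‖) (x - y)) x := by
    simpa [dist_eq_norm, Function.comp_def] using
      hnorm.hasFDerivAt.comp x ((hasFDerivAt_id x).sub_const y)
  have hmax : IsLocalMax (fun z => infDist z S - dist z y) x := .of_forall fun z => by
    simp only [hy, sub_self, sub_nonpos]
    exact infDist_le_dist_of_mem hyS
  rw [sub_eq_zero.1 (hmax.hasFDerivAt_eq_zero (hg.sub hdist))]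
  have : Nontrivial E := ⟨x - y, 0, hxy⟩
  exact norm_fderiv_norm hnorm

theorem neg_le_of_hasDerivAt_of_le {f : ℝ → ℝ} {f' C t₀ t : ℝ} (hf : HasDerivAt f f' t)
    (ht : t₀ < t) (hle : ∀ s ∈ Icc t₀ t, f s ≤ f t + C * (t - s)) : -C ≤ f' := by
  have hmax : IsLocalMaxOn (fun s => f s + C * s) (Icc t₀ t) t := by
    filter_upwards [self_mem_nhdsWithin] with s hs
    linarith [hle s hs]
  have hderiv : HasDerivAt (fun s => f s + C * s) (f' + C * 1) t :=
    hf.add ((hasDerivAt_id t).const_mul C)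
  have hcone : t₀ - t ∈ posTangentConeAt (Icc t₀ t) t :=
    sub_mem_posTangentConeAt_of_segment_subset (by rw [segment_symm, segment_eq_Icc ht.le])
  have hnonpos : (t₀ - t) * (f' + C * 1) ≤ 0 := by
    simpa using hmax.hasFDerivWithinAt_nonpos hderiv.hasFDerivAt.hasFDerivWithinAt hcone
  nlinarith

theorem inner_le_of_hasGradientWithinAt [CompleteSpace E] {f : E → ℝ} {s : Set E} {b g ν : E}
    {C : ℝ} (hf : HasGradientWithinAt f g s b) (hν : ∀ᶠ r in 𝓝[>] (0 : ℝ), b + r • ν ∈ s)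
    (hle : ∀ᶠ r in 𝓝[>] (0 : ℝ), f (b + r • ν) ≤ f b + C * r) : ⟪g, ν⟫ ≤ C := by
  have hsmul : Tendsto (fun r : ℝ => r • ν) (𝓝[>] 0) (𝓝 0) :=
    ((continuous_id.smul continuous_const).tendsto' 0 0 (zero_smul ℝ ν)).mono_left
      nhdsWithin_le_nhds
  have hunit : Tendsto (fun r : ℝ => r⁻¹ • r • ν) (𝓝[>] 0) (𝓝 ν) := by
    refine tendsto_const_nhds.congr' ?_
    filter_upwards [self_mem_nhdsWithin] with r (hr : 0 < r) using (inv_smul_smul₀ hr.ne' ν).symm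
  refine le_of_tendsto (hf.hasFDerivWithinAt.lim hsmul hν hunit) ?_
  filter_upwards [hle, self_mem_nhdsWithin] with r hr (hr0 : 0 < r)
  rw [smul_eq_mul, inv_mul_le_iff₀ hr0]
  linarith

theorem inner_le_of_le_add_mul_infDist [CompleteSpace E] {f : E → ℝ} {s S : Set E} {b g ν : E}
    {C : ℝ} (hf : HasGradientWithinAt f g s b) (hb : b ∈ S) (hC : 0 ≤ C) (hν : ‖ν‖ ≤ 1)
    (hνs : ∀ᶠ r in 𝓝[>] (0 : ℝ), b + r • ν ∈ s)
    (hle : ∀ᶠ x in 𝓝[s] b, f x ≤ f b + C * infDist x S) : ⟪g, ν⟫ ≤ C := by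
  refine inner_le_of_hasGradientWithinAt hf hνs ?_
  have hline : Tendsto (fun r : ℝ => b + r • ν) (𝓝[>] 0) (𝓝[s] b) :=
    tendsto_nhdsWithin_iff.2 ⟨((by fun_prop : Continuous fun r : ℝ => b + r • ν).tendsto' 0 b
      (by simp)).mono_left nhdsWithin_le_nhds, hνs⟩
  filter_upwards [hline.eventually hle, self_mem_nhdsWithin] with r hr (hr0 : 0 < r)
  have hdist : infDist (b + r • ν) S ≤ r := by
    refine (infDist_le_dist_of_mem hb).trans ?_
    rw [dist_eq_norm, add_sub_cancel_left, norm_smul, Real.norm_of_nonneg hr0.le]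
    exact mul_le_of_le_one_right hr0.le hν
  exact hr.trans (by gcongr)

end FirstOrder

/-- The exponents of the boundary profile `d ↦ m * k * d ^ (1 - β)`, whose derivative is
`k * d ^ (-β)`: they are `β = 1 / (p - 1)` and `m = (p - 1) / (p - 2)`, and are recorded through the
two identities that determine them. -/
structure ProfileExponents (p β m : ℝ) : Prop where
  two_lt : 2 < p
  mul_sub_one : β * (p - 1) = 1
  mul_one_sub : m * (1 - β) = 1

namespace ProfileExponents

variable {p β m k : ℝ}

theorem of_eq_one_div (hp : 2 < p) (hβ : β = 1 / (p - 1)) : ProfileExponents p β (1 - β)⁻¹ := by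
  have hβ1 : β < 1 := by rw [hβ, div_lt_one (by linarith)]; linarith
  refine ⟨hp, ?_, inv_mul_cancel₀ (sub_pos.2 hβ1).ne'⟩
  rw [hβ, one_div_mul_cancel (by linarith)]

theorem beta_pos (h : ProfileExponents p β m) : 0 < β := by
  nlinarith [h.two_lt, h.mul_sub_one]

theorem beta_lt_one (h : ProfileExponents p β m) : β < 1 := by
  nlinarith [h.two_lt, h.mul_sub_one]

theorem one_le (h : ProfileExponents p β m) : 1 ≤ m := by
  nlinarith [h.beta_pos, h.beta_lt_one, h.mul_one_sub]

theorem mul_p (h : ProfileExponents p β m) : β * p = β + 1 := by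
  linarith [h.mul_sub_one]

theorem mul_beta (h : ProfileExponents p β m) : m * β = 1 / (p - 2) := by
  have hp : p - 2 ≠ 0 := by linarith [h.two_lt]
  rw [eq_div_iff hp]
  linear_combination m * h.mul_sub_one + h.mul_one_sub

theorem rpow_sub_one_lt (h : ProfileExponents p β m) (hk : k ∈ Ioo 0 (β ^ β)) :
    k ^ (p - 1) < β := by
  calc k ^ (p - 1) < (β ^ β) ^ (p - 1) :=
        Real.rpow_lt_rpow hk.1.le hk.2 (by linarith [h.two_lt])
    _ = β := by rw [← Real.rpow_mul h.beta_pos.le, h.mul_sub_one, Real.rpow_one]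

end ProfileExponents

/-- The distance `d` to the boundary, shifted away from `0` where the cutoff value `ψ` is
positive. -/
def shiftedDist (m ρ d ψ : ℝ) : ℝ := d + ρ * ψ ^ m

/-- The barrier: the profile `m * k * d ^ (1 - β)` evaluated at the shifted distance, corrected so
that it still vanishes at `d = 0`. -/
def barrier (β m k ρ d ψ : ℝ) : ℝ := m * k * (shiftedDist m ρ d ψ ^ (1 - β) - ρ ^ (1 - β) * ψ)

section Barrier

variable {p β m k ρ d ψ : ℝ}

theorem barrier_zero_right (hm : m ≠ 0) : barrier β m k ρ d 0 = m * k * d ^ (1 - β) := by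
  simp [barrier, shiftedDist, Real.zero_rpow hm]

theorem mul_rpow_rpow_one_sub (hm : m * (1 - β) = 1) (hρ : 0 ≤ ρ) (hψ : 0 ≤ ψ) :
    (ρ * ψ ^ m) ^ (1 - β) = ρ ^ (1 - β) * ψ := by
  rw [Real.mul_rpow hρ (Real.rpow_nonneg hψ m), ← Real.rpow_mul hψ, hm, Real.rpow_one]

theorem barrier_zero_left (hm : m * (1 - β) = 1) (hρ : 0 ≤ ρ) (hψ : 0 ≤ ψ) :
    barrier β m k ρ 0 ψ = 0 := by
  simp [barrier, shiftedDist, mul_rpow_rpow_one_sub hm hρ hψ]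

theorem continuous_barrier (hm : 0 ≤ m) (hβ : β ≤ 1) :
    Continuous fun q : ℝ × ℝ => barrier β m k ρ q.1 q.2 := by
  have hshift : Continuous fun q : ℝ × ℝ => shiftedDist m ρ q.1 q.2 :=
    continuous_fst.add (continuous_const.mul (continuous_snd.rpow_const fun _ => .inr hm))
  exact continuous_const.mul ((hshift.rpow_const fun _ => .inr (sub_nonneg.2 hβ)).sub
    (continuous_const.mul continuous_snd))

theorem rpow_add_le_add_mul_rpow {s ε q : ℝ} (hs : 0 ≤ s) (hε : 0 < ε) (hq : q ∈ Icc (0 : ℝ) 1) :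
    (s + ε) ^ q ≤ ε ^ q + q * ε ^ (q - 1) * s := by
  calc (s + ε) ^ q = ε ^ q * (1 + s / ε) ^ q := by
        rw [← Real.mul_rpow hε.le (by positivity), mul_add, mul_one, mul_div_cancel₀ s hε.ne',
          add_comm]
    _ ≤ ε ^ q * (1 + q * (s / ε)) := by
        gcongr
        exact rpow_one_add_le_one_add_mul_self (by linarith [div_nonneg hs hε.le]) hq.1 hq.2
    _ = ε ^ q + q * ε ^ (q - 1) * s := by
        rw [Real.rpow_sub_one hε.ne']
        ring

theorem barrier_le_mul (h : ProfileExponents p β m) (hk : 0 ≤ k) (hρ : 0 < ρ) (hd : 0 ≤ d)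
    (hψ : 0 < ψ) : barrier β m k ρ d ψ ≤ k * ψ ^ (-(1 / (p - 2))) * ρ ^ (-β) * d := by
  have hε : 0 < ρ * ψ ^ m := by positivity
  have hm : 0 ≤ m := by linarith [h.one_le]
  have hε' : (ρ * ψ ^ m) ^ (-β) = ρ ^ (-β) * ψ ^ (-(1 / (p - 2))) := by
    rw [Real.mul_rpow hρ.le (by positivity), ← Real.rpow_mul hψ.le, mul_neg, h.mul_beta]
  have hconc := rpow_add_le_add_mul_rpow hd hε
    ⟨sub_nonneg.2 h.beta_lt_one.le, sub_le_self 1 h.beta_pos.le⟩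
  rw [mul_rpow_rpow_one_sub h.mul_one_sub hρ.le hψ.le, show 1 - β - 1 = -β by ring, hε'] at hconc
  calc barrier β m k ρ d ψ ≤ m * k * ((1 - β) * (ρ ^ (-β) * ψ ^ (-(1 / (p - 2)))) * d) :=
        mul_le_mul_of_nonneg_left (sub_le_iff_le_add'.2 hconc) (mul_nonneg hm hk)
    _ = m * (1 - β) * (k * ψ ^ (-(1 / (p - 2))) * ρ ^ (-β) * d) := by ring
    _ = k * ψ ^ (-(1 / (p - 2))) * ρ ^ (-β) * d := by rw [h.mul_one_sub, one_mul]

theorem barrier_le_barrier_add {ψ₁ ψ₂ : ℝ} (hm : 0 ≤ m) (hβ : β ≤ 1) (hk : 0 ≤ k) (hρ : 0 ≤ ρ)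
    (hd : 0 ≤ d) (hψ₁ : 0 ≤ ψ₁) (hψ : ψ₁ ≤ ψ₂) :
    barrier β m k ρ d ψ₁ ≤ barrier β m k ρ d ψ₂ + m * k * ρ ^ (1 - β) * (ψ₂ - ψ₁) := by
  have hmono : shiftedDist m ρ d ψ₁ ^ (1 - β) ≤ shiftedDist m ρ d ψ₂ ^ (1 - β) := by
    unfold shiftedDist
    have := sub_nonneg.2 hβ
    gcongr
  unfold barrier
  linear_combination m * k * hmono

theorem hasSecondDerivAt_shiftedDist {d ψ : ℝ → ℝ} {d₁ d₂ ψ₁ ψ₂ x : ℝ}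
    (hd : HasSecondDerivAt d d₁ d₂ x) (hψ : HasSecondDerivAt ψ ψ₁ ψ₂ x) (hψ0 : 0 < ψ x) :
    HasSecondDerivAt (fun y => shiftedDist m ρ (d y) (ψ y)) (d₁ + ρ * m * ψ x ^ (m - 1) * ψ₁)
      (d₂ + ρ * m * ((m - 1) * ψ x ^ (m - 2) * ψ₁ ^ 2 + ψ x ^ (m - 1) * ψ₂)) x :=
  (hd.add ((hψ.rpow_const hψ0 m).const_mul ρ)).congr_deriv (by ring) (by ring)

theorem hasSecondDerivAt_barrier {d ψ : ℝ → ℝ} {z₁ z₂ ψ₁ ψ₂ x : ℝ} (hm : m * (1 - β) = 1)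
    (hz : HasSecondDerivAt (fun y => shiftedDist m ρ (d y) (ψ y)) z₁ z₂ x)
    (hψ : HasSecondDerivAt ψ ψ₁ ψ₂ x) (hz0 : 0 < shiftedDist m ρ (d x) (ψ x)) :
    HasSecondDerivAt (fun y => barrier β m k ρ (d y) (ψ y))
      (k * shiftedDist m ρ (d x) (ψ x) ^ (-β) * z₁ - m * k * ρ ^ (1 - β) * ψ₁)
      (k * (-β * shiftedDist m ρ (d x) (ψ x) ^ (-β - 1) * z₁ ^ 2 +
        shiftedDist m ρ (d x) (ψ x) ^ (-β) * z₂) - m * k * ρ ^ (1 - β) * ψ₂) x := by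
  refine (((hz.rpow_const hz0 (1 - β)).sub (hψ.const_mul (ρ ^ (1 - β)))).const_mul
    (m * k)).congr_deriv ?_ ?_
  · rw [show 1 - β - 1 = -β by ring]
    linear_combination k * shiftedDist m ρ (d x) (ψ x) ^ (-β) * z₁ * hm
  · rw [show 1 - β - 1 = -β by ring, show 1 - β - 2 = -β - 1 by ring]
    linear_combination k * (-β * shiftedDist m ρ (d x) (ψ x) ^ (-β - 1) * z₁ ^ 2 +
      shiftedDist m ρ (d x) (ψ x) ^ (-β) * z₂) * hm

end Barrier

/-- A spatial cutoff of height `α` that vanishes to second order on the sphere of radius `ρ`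
centred at `a`. -/
def cutoff {E : Type*} [NormedAddCommGroup E] (α : ℝ) (a : E) (ρ : ℝ) (x : E) : ℝ :=
  α * (1 - ‖x - a‖ ^ 2 / ρ ^ 2) ^ 2

/-- The value `ψ`, gradient `q` and Laplacian `l` at a point of a positive cutoff varying slowly at
the length scale `ρ`. -/
structure IsSlowJet {E : Type*} [NormedAddCommGroup E] (lam ρ ψ : ℝ) (q : E) (l : ℝ) : Prop where
  pos : 0 < ψ
  le_one : ψ ≤ 1
  norm_le : ‖q‖ ≤ lam / ρ
  norm_sq_le : ‖q‖ ^ 2 ≤ lam / ρ ^ 2 * ψ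
  abs_le : |l| ≤ lam / ρ ^ 2

section Cutoff

variable {E : Type*} [NormedAddCommGroup E] {α ρ : ℝ} {a x : E}

theorem continuous_cutoff : Continuous fun q : ℝ × E => cutoff q.1 a ρ q.2 := by
  unfold cutoff
  fun_prop

theorem cutoff_zero_left : cutoff 0 a ρ x = 0 := by
  simp [cutoff]

theorem cutoff_eq_zero_of_norm_eq (hρ : ρ ≠ 0) (hx : ‖x - a‖ = ρ) : cutoff α a ρ x = 0 := by
  simp [cutoff, hx, hρ]

theorem cutoff_nonneg (hα : 0 ≤ α) : 0 ≤ cutoff α a ρ x :=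
  mul_nonneg hα (sq_nonneg _)

theorem one_sub_norm_sq_div_mem (hρ : 0 < ρ) (hx : ‖x - a‖ ≤ ρ) :
    1 - ‖x - a‖ ^ 2 / ρ ^ 2 ∈ Icc (0 : ℝ) 1 := by
  exact ⟨sub_nonneg.2 <| (div_le_one (by positivity)).2 <| by gcongr,
    sub_le_self 1 (by positivity)⟩

theorem cutoff_sub_cutoff_le {α₁ α₂ : ℝ} (hα : α₁ ≤ α₂) (hρ : 0 < ρ) (hx : ‖x - a‖ ≤ ρ) :
    cutoff α₂ a ρ x - cutoff α₁ a ρ x ≤ α₂ - α₁ := by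
  obtain ⟨h0, h1⟩ := one_sub_norm_sq_div_mem hρ hx
  rw [cutoff, cutoff, ← sub_mul]
  exact mul_le_of_le_one_right (sub_nonneg.2 hα) (pow_le_one₀ h0 h1)

theorem mul_le_cutoff_of_half (hα : 0 ≤ α) (hρ : 0 < ρ) (hx : ‖x - a‖ ≤ ρ / 2) :
    α * (9 / 16) ≤ cutoff α a ρ x := by
  have hquarter : ‖x - a‖ ^ 2 / ρ ^ 2 ≤ 1 / 4 := by
    rw [div_le_iff₀ (by positivity)]
    calc ‖x - a‖ ^ 2 ≤ (ρ / 2) ^ 2 := by gcongr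
      _ = 1 / 4 * ρ ^ 2 := by ring
  refine mul_le_mul_of_nonneg_left ?_ hα
  nlinarith

variable [InnerProductSpace ℝ E]

/-- The gradient of the cutoff. -/
def cutoffGradient (α : ℝ) (a : E) (ρ : ℝ) (x : E) : E :=
  -(4 * α * (1 - ‖x - a‖ ^ 2 / ρ ^ 2) / ρ ^ 2) • (x - a)

/-- The second derivative of the cutoff in the direction `e`. -/
def cutoffSecondDeriv (α : ℝ) (a : E) (ρ : ℝ) (x e : E) : ℝ :=
  α * (8 * ⟪x - a, e⟫ ^ 2 / ρ ^ 4 - 4 * (1 - ‖x - a‖ ^ 2 / ρ ^ 2) * ‖e‖ ^ 2 / ρ ^ 2)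

theorem hasSecondDerivAt_cutoff_line (e : E) :
    HasSecondDerivAt (fun s : ℝ => cutoff α a ρ (x + s • e))
      ⟪cutoffGradient α a ρ x, e⟫ (cutoffSecondDeriv α a ρ x e) 0 := by
  have hquad : HasSecondDerivAt (fun s : ℝ => ‖x + s • e - a‖ ^ 2 / ρ ^ 2)
      (2 * ⟪x - a, e⟫ / ρ ^ 2) (2 * ‖e‖ ^ 2 / ρ ^ 2) 0 := by
    have hexp (s : ℝ) : ‖x + s • e - a‖ ^ 2 =
        ‖x - a‖ ^ 2 + (2 * ⟪x - a, e⟫ * s + ‖e‖ ^ 2 * s ^ 2) := by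
      rw [add_sub_right_comm, norm_add_sq_real, inner_smul_right, norm_smul, mul_pow,
        Real.norm_eq_abs, sq_abs]
      ring
    refine ⟨fun s => (2 * ⟪x - a, e⟫ + ‖e‖ ^ 2 * (2 * s)) / ρ ^ 2, .of_forall fun s => ?_,
      by simp, ?_⟩
    · simp only [hexp]
      exact (((((hasDerivAt_id s).const_mul (2 * ⟪x - a, e⟫)).add
        ((hasDerivAt_pow 2 s).const_mul (‖e‖ ^ 2))).const_add _).div_const _).congr_deriv
          (by norm_num)
    · exact (((((hasDerivAt_id (0 : ℝ)).const_mul 2).const_mul (‖e‖ ^ 2)).const_add _).div_const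
        _).congr_deriv (by ring)
  refine ((hquad.const_sub 1).sq.const_mul α).congr_deriv ?_ ?_
  · simp only [cutoffGradient, zero_smul, add_zero, inner_smul_left, conj_trivial]
    ring
  · simp only [cutoffSecondDeriv, zero_smul, add_zero]
    ring

theorem isSlowJet_cutoff {ι : Type*} [Fintype ι] (e : OrthonormalBasis ι ℝ E) {lam : ℝ}
    (hα : 0 < α) (hαlam : (16 + 4 * Fintype.card ι) * α ≤ lam) (hlam : lam ≤ 1) (hρ : 0 < ρ)
    (hx : ‖x - a‖ < ρ) :
    IsSlowJet lam ρ (cutoff α a ρ x) (cutoffGradient α a ρ x)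
      (∑ i, cutoffSecondDeriv α a ρ x (e i)) := by
  obtain ⟨-, hφ1⟩ := one_sub_norm_sq_div_mem hρ hx.le
  have hφ0 : 0 < 1 - ‖x - a‖ ^ 2 / ρ ^ 2 :=
    sub_pos.2 <| (div_lt_one (by positivity)).2 <| by gcongr
  unfold cutoff cutoffGradient cutoffSecondDeriv
  set φ := 1 - ‖x - a‖ ^ 2 / ρ ^ 2 with hφ
  have hcard : 0 ≤ (Fintype.card ι : ℝ) * α := by positivity
  have hsq : ‖x - a‖ ^ 2 = (1 - φ) * ρ ^ 2 := by rw [hφ]; field_simp; ring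
  have hnorm : ‖-(4 * α * φ / ρ ^ 2) • (x - a)‖ = 4 * α * φ / ρ ^ 2 * ‖x - a‖ := by
    rw [norm_smul, norm_neg, Real.norm_of_nonneg (by positivity)]
  have hlap : ∑ i, α * (8 * ⟪x - a, e i⟫ ^ 2 / ρ ^ 4 - 4 * φ * ‖e i‖ ^ 2 / ρ ^ 2) =
      α * (8 * (1 - φ) - 4 * Fintype.card ι * φ) / ρ ^ 2 := by
    simp only [e.norm_eq_one, one_pow, ← Finset.mul_sum, Finset.sum_sub_distrib, ← Finset.sum_div,
      e.sum_sq_inner_left, Finset.sum_const, Finset.card_univ, nsmul_eq_mul, hsq]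
    field_simp
  refine ⟨by positivity, ?_, ?_, ?_, ?_⟩
  · nlinarith [pow_le_one₀ hφ0.le hφ1 (n := 2)]
  · calc _ ≤ 4 * α * 1 / ρ ^ 2 * ρ := by rw [hnorm]; gcongr
      _ = 4 * α / ρ := by field_simp
      _ ≤ lam / ρ := by gcongr; linarith
  · calc _ = 16 * α * (1 - φ) / ρ ^ 2 * (α * φ ^ 2) := by rw [hnorm, mul_pow, hsq]; field_simp; ring
      _ ≤ lam / ρ ^ 2 * (α * φ ^ 2) := by gcongr; nlinarith
  · rw [hlap, abs_div, abs_of_pos (by positivity : 0 < ρ ^ 2)]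
    gcongr
    rw [abs_le]
    constructor <;> nlinarith

end Cutoff

/-- The room left in the supersolution inequality for the barrier, per unit of
`k * z ^ (-β - 1)` with `z` the shifted distance, when its cutoff is slow at rate `lam`. -/
def supersolutionGap (p β m k lam : ℝ) : ℝ :=
  β * (1 - m * lam) ^ 2 - (8 * m + 2 * m ^ 2) * lam - k ^ (p - 1) * (1 + 3 * m * lam) ^ p

theorem exists_supersolutionGap_pos {p β m k : ℝ} (hp : 0 ≤ p) (hk : k ^ (p - 1) < β) :
    ∃ lam > 0, lam ≤ 1 ∧ m * lam ≤ 1 ∧ 0 < supersolutionGap p β m k lam := by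
  have hcont : Continuous (supersolutionGap p β m k) := by
    have : Continuous fun lam : ℝ => (1 + 3 * m * lam) ^ p :=
      Continuous.rpow_const (by fun_prop) fun _ => .inr hp
    unfold supersolutionGap
    fun_prop
  have hgap : ∀ᶠ lam in 𝓝 (0 : ℝ), 0 < supersolutionGap p β m k lam :=
    hcont.continuousAt.eventually_const_lt (by simpa [supersolutionGap] using hk)
  have hm : ∀ᶠ lam in 𝓝 (0 : ℝ), m * lam < 1 :=
    (continuous_const.mul continuous_id).continuousAt.eventually_lt_const (by simp)
  have hone : ∀ᶠ lam in 𝓝 (0 : ℝ), lam < 1 := eventually_lt_nhds one_pos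
  obtain ⟨lam, ⟨hlam, hmlam, hlam1⟩, hlam0⟩ :=
    (((hgap.and (hm.and hone)).filter_mono nhdsWithin_le_nhds).and
      (self_mem_nhdsWithin (s := Ioi 0))).exists
  exact ⟨lam, hlam0, hlam1.le, hmlam.le, hlam⟩

section Supersolution

variable {E : Type*} [NormedAddCommGroup E] {p β m k lam ρ ψ l L z : ℝ} {q ζ : E}

theorem IsSlowJet.laplacian_shift_le (h : IsSlowJet lam ρ ψ q l) (hm : 1 ≤ m) (hρ : 0 < ρ) :
    ρ * m * ((m - 1) * ψ ^ (m - 2) * ‖q‖ ^ 2 + ψ ^ (m - 1) * l) ≤ m ^ 2 * lam / ρ := by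
  have hψ := h.pos
  have hm1 : 0 ≤ m - 1 := sub_nonneg.2 hm
  have hlam : 0 ≤ lam / ρ ^ 2 := (abs_nonneg l).trans h.abs_le
  have hpow : ψ ^ (m - 1) ≤ 1 := Real.rpow_le_one hψ.le h.le_one hm1
  have hmul : ψ ^ (m - 2) * ψ = ψ ^ (m - 1) := by
    rw [← Real.rpow_add_one hψ.ne']
    congr 1
    ring
  calc ρ * m * ((m - 1) * ψ ^ (m - 2) * ‖q‖ ^ 2 + ψ ^ (m - 1) * l)
      ≤ ρ * m * ((m - 1) * ψ ^ (m - 2) * (lam / ρ ^ 2 * ψ) + ψ ^ (m - 1) * (lam / ρ ^ 2)) := by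
        gcongr
        exacts [h.norm_sq_le, (le_abs_self l).trans h.abs_le]
    _ = ρ * m ^ 2 * (lam / ρ ^ 2) * ψ ^ (m - 1) := by rw [← hmul]; ring
    _ ≤ ρ * m ^ 2 * (lam / ρ ^ 2) * 1 := by gcongr
    _ = m ^ 2 * lam / ρ := by field_simp

theorem rpow_neg_le_two_mul_rpow_neg (hβ : β ∈ Icc (0 : ℝ) 1) (hz : 0 < z) (hzρ : z ≤ 2 * ρ) :
    ρ ^ (-β) ≤ 2 * z ^ (-β) := by
  have hρ : 0 < ρ := by linarith
  calc ρ ^ (-β) = 2 ^ β * (2 * ρ) ^ (-β) := by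
        rw [Real.mul_rpow two_pos.le hρ.le, ← mul_assoc, ← Real.rpow_add two_pos, add_neg_cancel,
          Real.rpow_zero, one_mul]
    _ ≤ 2 ^ (1 : ℝ) * z ^ (-β) := by
        exact mul_le_mul (Real.rpow_le_rpow_of_exponent_le one_le_two hβ.2)
          (Real.rpow_le_rpow_of_nonpos hz hzρ (neg_nonpos.2 hβ.1)) (by positivity) (by positivity)
    _ = 2 * z ^ (-β) := by rw [Real.rpow_one]

theorem rpow_neg_le_mul_rpow_neg_sub_one (hz : 0 < z) (hzρ : z ≤ 2 * ρ) :
    z ^ (-β) ≤ 2 * ρ * z ^ (-β - 1) := by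
  calc z ^ (-β) = z * z ^ (-β - 1) := by rw [Real.rpow_sub_one hz.ne', mul_div_cancel₀ _ hz.ne']
    _ ≤ 2 * ρ * z ^ (-β - 1) := by gcongr

theorem rpow_one_sub_le_mul_rpow_neg_sub_one (hβ : β ∈ Icc (0 : ℝ) 1) (hz : 0 < z)
    (hzρ : z ≤ 2 * ρ) : ρ ^ (1 - β) ≤ 4 * ρ ^ 2 * z ^ (-β - 1) := by
  have hρ : 0 < ρ := by linarith
  calc ρ ^ (1 - β) = ρ ^ (-β) * ρ := by rw [← Real.rpow_add_one hρ.ne', neg_add_eq_sub]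
    _ ≤ 2 * (2 * ρ * z ^ (-β - 1)) * ρ := by
        gcongr
        exact (rpow_neg_le_two_mul_rpow_neg hβ hz hzρ).trans
          (mul_le_mul_of_nonneg_left (rpow_neg_le_mul_rpow_neg_sub_one hz hzρ) two_pos.le)
    _ = 4 * ρ ^ 2 * z ^ (-β - 1) := by ring

variable [NormedSpace ℝ E]

theorem IsSlowJet.norm_shift_le (h : IsSlowJet lam ρ ψ q l) (hm : 1 ≤ m) (hρ : 0 < ρ) :
    ‖(ρ * m * ψ ^ (m - 1)) • q‖ ≤ m * lam := by
  have hψ := h.pos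
  have hpow : ψ ^ (m - 1) ≤ 1 := Real.rpow_le_one hψ.le h.le_one (sub_nonneg.2 hm)
  calc ‖(ρ * m * ψ ^ (m - 1)) • q‖ = ρ * m * ψ ^ (m - 1) * ‖q‖ := by
        rw [norm_smul, Real.norm_of_nonneg (by positivity)]
    _ ≤ ρ * m * 1 * (lam / ρ) := by gcongr; exact h.norm_le
    _ = m * lam := by field_simp

theorem norm_barrier_gradient_le (hβ : β ∈ Icc (0 : ℝ) 1) (hm : 0 ≤ m) (hk : 0 ≤ k) (hz : 0 < z)
    (hzρ : z ≤ 2 * ρ) (hζ : ‖ζ‖ ≤ 1 + m * lam) (hq : ‖q‖ ≤ lam / ρ) :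
    ‖(k * z ^ (-β)) • ζ - (m * k * ρ ^ (1 - β)) • q‖ ≤ k * z ^ (-β) * (1 + 3 * m * lam) := by
  have hρ : 0 < ρ := by linarith
  have hlam : 0 ≤ lam := by simpa [hρ.ne'] using mul_nonneg ((norm_nonneg q).trans hq) hρ.le
  have hρβ : ρ ^ (1 - β) = ρ ^ (-β) * ρ := by
    rw [← Real.rpow_add_one hρ.ne', neg_add_eq_sub]
  calc ‖(k * z ^ (-β)) • ζ - (m * k * ρ ^ (1 - β)) • q‖
      ≤ k * z ^ (-β) * ‖ζ‖ + m * k * ρ ^ (1 - β) * ‖q‖ := by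
        refine (norm_sub_le _ _).trans_eq ?_
        rw [norm_smul, norm_smul, Real.norm_of_nonneg (by positivity),
          Real.norm_of_nonneg (by positivity)]
    _ ≤ k * z ^ (-β) * (1 + m * lam) + m * k * ρ ^ (1 - β) * (lam / ρ) := by gcongr
    _ = k * z ^ (-β) * (1 + m * lam) + m * k * ρ ^ (-β) * lam := by rw [hρβ]; field_simp
    _ ≤ k * z ^ (-β) * (1 + m * lam) + m * k * (2 * z ^ (-β)) * lam := by
        gcongr
        exact rpow_neg_le_two_mul_rpow_neg hβ hz hzρ
    _ = k * z ^ (-β) * (1 + 3 * m * lam) := by ring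

theorem norm_barrier_gradient_rpow_le (h : ProfileExponents p β m) (hk : 0 < k) (hz : 0 < z)
    (hzρ : z ≤ 2 * ρ) (hlam : 0 ≤ lam) (hζ : ‖ζ‖ ≤ 1 + m * lam) (hq : ‖q‖ ≤ lam / ρ) :
    ‖(k * z ^ (-β)) • ζ - (m * k * ρ ^ (1 - β)) • q‖ ^ p ≤
      k * z ^ (-β - 1) * (k ^ (p - 1) * (1 + 3 * m * lam) ^ p) := by
  have hm : 0 < m := one_pos.trans_le h.one_le
  calc ‖(k * z ^ (-β)) • ζ - (m * k * ρ ^ (1 - β)) • q‖ ^ p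
      ≤ (k * z ^ (-β) * (1 + 3 * m * lam)) ^ p :=
        Real.rpow_le_rpow (norm_nonneg _) (norm_barrier_gradient_le
          ⟨h.beta_pos.le, h.beta_lt_one.le⟩ hm.le hk.le hz hzρ hζ hq) (by linarith [h.two_lt])
    _ = k ^ p * z ^ (-β - 1) * (1 + 3 * m * lam) ^ p := by
        rw [Real.mul_rpow (by positivity) (by positivity), Real.mul_rpow hk.le (by positivity),
          ← Real.rpow_mul hz.le, neg_mul, h.mul_p, neg_add']
    _ = k * z ^ (-β - 1) * (k ^ (p - 1) * (1 + 3 * m * lam) ^ p) := by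
        rw [Real.rpow_sub_one hk.ne']
        field_simp

theorem norm_barrier_gradient_rpow_lt (h : ProfileExponents p β m) (hk : 0 < k) (hz : 0 < z)
    (hzρ : z ≤ 2 * ρ) (hmlam : m * lam ≤ 1) (hζ : ‖ζ‖ ∈ Icc (1 - m * lam) (1 + m * lam))
    (hq : ‖q‖ ≤ lam / ρ) (hl : |l| ≤ lam / ρ ^ 2) {Δz : ℝ} (hΔz : Δz ≤ L + m ^ 2 * lam / ρ)
    (hL : 0 ≤ L) (hgap : 2 * ρ * L < supersolutionGap p β m k lam) :
    ‖(k * z ^ (-β)) • ζ - (m * k * ρ ^ (1 - β)) • q‖ ^ p <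
      -(m * k * ρ ^ (1 - β) * (lam / ρ ^ 2)) -
        (k * (-β * z ^ (-β - 1) * ‖ζ‖ ^ 2 + z ^ (-β) * Δz) - m * k * ρ ^ (1 - β) * l) := by
  have hρ : 0 < ρ := by linarith
  have hβ := h.beta_pos
  have hm : 0 < m := one_pos.trans_le h.one_le
  have hlam : 0 ≤ lam := by simpa [hρ.ne'] using mul_nonneg ((norm_nonneg q).trans hq) hρ.le
  have hX : 0 < z ^ (-β - 1) := Real.rpow_pos_of_pos hz _
  have hgrad := norm_barrier_gradient_rpow_le h hk hz hzρ hlam hζ.2 hq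
  have hlaplacian : k * z ^ (-β) * Δz ≤ k * z ^ (-β - 1) * (2 * ρ * L + 2 * m ^ 2 * lam) := by
    calc k * z ^ (-β) * Δz ≤ k * z ^ (-β) * (L + m ^ 2 * lam / ρ) := by gcongr
      _ ≤ k * (2 * ρ * z ^ (-β - 1)) * (L + m ^ 2 * lam / ρ) := by
          gcongr
          exact rpow_neg_le_mul_rpow_neg_sub_one hz hzρ
      _ = k * z ^ (-β - 1) * (2 * ρ * L + 2 * m ^ 2 * lam) := by field_simp
  have hcorrection :
      m * k * ρ ^ (1 - β) * (lam / ρ ^ 2 - l) ≤ k * z ^ (-β - 1) * (8 * m * lam) := by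
    calc m * k * ρ ^ (1 - β) * (lam / ρ ^ 2 - l)
        ≤ m * k * ρ ^ (1 - β) * (lam / ρ ^ 2 + lam / ρ ^ 2) := by
          gcongr
          linarith [neg_abs_le l]
      _ ≤ m * k * (4 * ρ ^ 2 * z ^ (-β - 1)) * (lam / ρ ^ 2 + lam / ρ ^ 2) := by
          gcongr
          exact rpow_one_sub_le_mul_rpow_neg_sub_one ⟨hβ.le, h.beta_lt_one.le⟩ hz hzρ
      _ = k * z ^ (-β - 1) * (8 * m * lam) := by field_simp; ring
  have hsq : k * z ^ (-β - 1) * (β * (1 - m * lam) ^ 2) ≤ k * z ^ (-β - 1) * (β * ‖ζ‖ ^ 2) := by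
    have := sub_nonneg.2 hmlam
    gcongr
    exact hζ.1
  have hstrict := mul_lt_mul_of_pos_left hgap (mul_pos hk hX)
  unfold supersolutionGap at hstrict
  linarith

end Supersolution

theorem exists_parabolic_max {X : Type*} [TopologicalSpace X] {D : Set X} {f : X → ℝ → ℝ}
    {t₀ t : ℝ} {x₀ : X} (hD : IsCompact (closure D))
    (hf : ContinuousOn (fun q : X × ℝ => f q.1 q.2) (closure D ×ˢ Icc t₀ t))
    (hinit : ∀ x ∈ closure D, f x t₀ ≤ 0) (hlat : ∀ x ∈ frontier D, ∀ s ∈ Ioc t₀ t, f x s ≤ 0)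
    (hx₀ : x₀ ∈ closure D) (ht : t₀ ≤ t) (hpos : 0 < f x₀ t) :
    ∃ x ∈ interior D, ∃ τ ∈ Ioc t₀ t, ∀ y ∈ closure D, ∀ s ∈ Icc t₀ t, f y s ≤ f x τ := by
  obtain ⟨⟨x, τ⟩, ⟨hx, hτ⟩, hmax⟩ :=
    (hD.prod isCompact_Icc).exists_isMaxOn ⟨(x₀, t), hx₀, right_mem_Icc.2 ht⟩ hf
  have hle (y) (hy : y ∈ closure D) (s) (hs : s ∈ Icc t₀ t) : f y s ≤ f x τ :=
    hmax (a := (y, s)) ⟨hy, hs⟩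
  have hfpos : 0 < f x τ := hpos.trans_le (hle x₀ hx₀ t (right_mem_Icc.2 ht))
  have hτ₀ : t₀ < τ := hτ.1.lt_of_ne fun h => (hinit x hx).not_gt (h ▸ hfpos)
  have hxD : x ∈ interior D := by
    by_contra hxD
    exact (hlat x ⟨hx, hxD⟩ τ ⟨hτ₀, hτ.2⟩).not_gt hfpos
  exact ⟨x, hxD, τ, ⟨hτ₀, hτ.2⟩, hle⟩

section Comparison

variable {E ι : Type*} [NormedAddCommGroup E] [InnerProductSpace ℝ E] [Fintype ι]

theorem eq_and_sum_inner_le_of_isLocalMax_sub [CompleteSpace E] (e : OrthonormalBasis ι ℝ E)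
    {f φ : E → ℝ} {G : E → E} {H : E →L[ℝ] E} {W x : E} {w₂ : ι → ℝ}
    (hf : ∀ᶠ y in 𝓝 x, HasGradientAt f (G y) y) (hG : HasFDerivAt G H x)
    (hφ : ∀ i, HasSecondDerivAt (fun s : ℝ => φ (x + s • e i)) ⟪W, e i⟫ (w₂ i) 0)
    (hmax : IsLocalMax (fun y => f y - φ y) x) :
    G x = W ∧ ∑ i, ⟪H (e i), e i⟫ ≤ ∑ i, w₂ i := by
  have hline (i) : HasSecondDerivAt (fun s : ℝ => f (x + s • e i)) ⟪G x, e i⟫ ⟪H (e i), e i⟫ 0 := by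
    have hinner : HasFDerivAt (fun y => InnerProductSpace.toDual ℝ E (G y) (e i))
        ((innerSL ℝ (e i)).comp H) x := by
      simpa only [Function.comp_def, coe_innerSL_apply, InnerProductSpace.toDual_apply_apply,
        real_inner_comm] using (innerSL ℝ (e i)).hasFDerivAt.comp x hG
    refine (HasSecondDerivAt.of_hasFDerivAt_line (hf.mono fun y hy => hy.hasFDerivAt)
      hinner).congr_deriv rfl ?_
    simp only [ContinuousLinearMap.comp_apply, coe_innerSL_apply, real_inner_comm]
  have hcompare (i) : ⟪G x, e i⟫ = ⟪W, e i⟫ ∧ ⟪H (e i), e i⟫ ≤ w₂ i := by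
    refine (hline i).eq_and_le_of_isLocalMax_sub (hφ i) ?_
    have hcont : ContinuousAt (fun s : ℝ => x + s • e i) 0 := by fun_prop
    exact IsLocalMax.comp_continuous (g := fun s : ℝ => x + s • e i) (b := 0) (by simpa using hmax)
      hcont
  exact ⟨InnerProductSpace.ext_inner_right_basis e.toBasis fun i => by
      simpa only [e.coe_toBasis] using (hcompare i).1,
    Finset.sum_le_sum fun i _ => (hcompare i).2⟩

/-- `v` is a classical subsolution of `∂ₜv - Δv = |∇v|^p` on `D × J`. Its spatial gradient `G`,
spatial Hessian `H` and time derivative `v'` are part of the data, and the Laplacian is the trace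
of `H` in the orthonormal basis `e`. -/
structure IsClassicalSubsolution [CompleteSpace E] (e : OrthonormalBasis ι ℝ E) (p : ℝ) (D : Set E)
    (J : Set ℝ) (v : E → ℝ → ℝ) (G : E → ℝ → E) (H : E → ℝ → E →L[ℝ] E) (v' : E → ℝ → ℝ) :
    Prop where
  hasGradientAt : ∀ x ∈ D, ∀ t ∈ J, HasGradientAt (fun y => v y t) (G x t) x
  hasFDerivAt : ∀ x ∈ D, ∀ t ∈ J, HasFDerivAt (fun y => G y t) (H x t) x
  hasDerivAt : ∀ x ∈ D, ∀ t ∈ J, HasDerivAt (v x) (v' x t) t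
  le : ∀ x ∈ D, ∀ t ∈ J, v' x t - ∑ i, ⟪H x t (e i), e i⟫ ≤ ‖G x t‖ ^ p

theorem IsClassicalSubsolution.of_hasDerivWithinAt [CompleteSpace E] {e : OrthonormalBasis ι ℝ E}
    {p t₀ t₁ : ℝ} {D Ω : Set E} {v : E → ℝ → ℝ} {G : E → ℝ → E} {H : E → ℝ → E →L[ℝ] E}
    {v' : E → ℝ → ℝ} (hΩ : ∀ x ∈ D, Ω ∈ 𝓝 x)
    (hG : ∀ t ∈ Icc t₀ t₁, ∀ x ∈ Ω, HasGradientWithinAt (fun y => v y t) (G x t) Ω x)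
    (hH : ∀ t ∈ Icc t₀ t₁, ∀ x ∈ Ω, HasFDerivWithinAt (fun y => G y t) (H x t) Ω x)
    (hv' : ∀ x ∈ Ω, ∀ t ∈ Icc t₀ t₁, HasDerivWithinAt (v x) (v' x t) (Icc t₀ t₁) t)
    (hle : ∀ x ∈ D, ∀ t ∈ Ioo t₀ t₁, v' x t - ∑ i, ⟪H x t (e i), e i⟫ ≤ ‖G x t‖ ^ p) :
    IsClassicalSubsolution e p D (Ioo t₀ t₁) v G H v' where
  hasGradientAt x hx t ht :=
    (hG t (Ioo_subset_Icc_self ht) x (mem_of_mem_nhds (hΩ x hx))).hasFDerivWithinAt.hasFDerivAt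
      (hΩ x hx)
  hasFDerivAt x hx t ht :=
    (hH t (Ioo_subset_Icc_self ht) x (mem_of_mem_nhds (hΩ x hx))).hasFDerivAt (hΩ x hx)
  hasDerivAt x hx t ht :=
    (hv' x (mem_of_mem_nhds (hΩ x hx)) t (Ioo_subset_Icc_self ht)).hasDerivAt
      (Icc_mem_nhds ht.1 ht.2)
  le := hle

/-- `w` satisfies `∂ₜw - Δw > |∇w|^p` at `(x, t)`, with the time derivative replaced by a lower
bound `-C` on the backward difference quotients down to time `t₀`. -/
def IsStrictSupersolutionAt (e : OrthonormalBasis ι ℝ E) (p : ℝ) (w : E → ℝ → ℝ) (t₀ : ℝ) (x : E)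
    (t : ℝ) : Prop :=
  ∃ (C : ℝ) (W : E) (w₂ : ι → ℝ), (∀ s ∈ Icc t₀ t, w x s ≤ w x t + C * (t - s)) ∧
    (∀ i, HasSecondDerivAt (fun s : ℝ => w (x + s • e i) t) ⟪W, e i⟫ (w₂ i) 0) ∧
    ‖W‖ ^ p < -C - ∑ i, w₂ i

theorem IsClassicalSubsolution.le_of_isStrictSupersolutionAt [ProperSpace E]
    {e : OrthonormalBasis ι ℝ E} {p t₀ t₁ : ℝ} {D : Set E} {v w : E → ℝ → ℝ} {G : E → ℝ → E}
    {H : E → ℝ → E →L[ℝ] E} {v' : E → ℝ → ℝ} (hDo : IsOpen D) (hDb : Bornology.IsBounded D)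
    (hv : IsClassicalSubsolution e p D (Ioo t₀ t₁) v G H v')
    (hw : ∀ x ∈ D, ∀ t ∈ Ioo t₀ t₁, IsStrictSupersolutionAt e p w t₀ x t)
    (hvc : ContinuousOn (fun q : E × ℝ => v q.1 q.2) (closure D ×ˢ Icc t₀ t₁))
    (hwc : ContinuousOn (fun q : E × ℝ => w q.1 q.2) (closure D ×ˢ Icc t₀ t₁))
    (hinit : ∀ x ∈ closure D, v x t₀ ≤ w x t₀)
    (hlat : ∀ x ∈ frontier D, ∀ t ∈ Ioo t₀ t₁, v x t ≤ w x t)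
    {x : E} (hx : x ∈ closure D) {t : ℝ} (ht : t ∈ Ioo t₀ t₁) : v x t ≤ w x t := by
  by_contra! hlt
  obtain ⟨y, hy, τ, hτ, hmax⟩ := exists_parabolic_max (f := fun x t => v x t - w x t)
    hDb.isCompact_closure
    ((hvc.sub hwc).mono (prod_mono_right (Icc_subset_Icc_right ht.2.le)))
    (fun x hx => sub_nonpos.2 (hinit x hx))
    (fun x hx s hs => sub_nonpos.2 (hlat x hx s ⟨hs.1, hs.2.trans_lt ht.2⟩)) hx ht.1.le
    (sub_pos.2 hlt)
  rw [hDo.interior_eq] at hy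
  have hτ' : τ ∈ Ioo t₀ t₁ := ⟨hτ.1, hτ.2.trans_lt ht.2⟩
  have hnhds : D ∈ 𝓝 y := hDo.mem_nhds hy
  obtain ⟨C, W, w₂, htime, hspace, hstrict⟩ := hw y hy τ hτ'
  obtain ⟨hG, hlap⟩ := eq_and_sum_inner_le_of_isLocalMax_sub e
    (eventually_of_mem hnhds fun z hz => hv.hasGradientAt z hz τ hτ') (hv.hasFDerivAt y hy τ hτ')
    hspace (eventually_of_mem hnhds fun z hz => hmax z (subset_closure hz) τ ⟨hτ.1.le, hτ.2⟩)
  have hderiv : -C ≤ v' y τ := neg_le_of_hasDerivAt_of_le (hv.hasDerivAt y hy τ hτ') hτ.1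
    fun s hs => by
      linarith [hmax y (subset_closure hy) s ⟨hs.1, hs.2.trans hτ.2⟩, htime s hs]
  linarith [hG ▸ hv.le y hy τ hτ']

end Comparison

section LocalBarrier

variable {E : Type*} [NormedAddCommGroup E] {p β m k lam κ ρ t₀ t₁ T : ℝ} {ω : Set E} {a x : E}

/-- The barrier near the boundary point `a` of `ω`, with a cutoff whose height grows linearly in
time from `0` at time `t₀` to `κ` at time `t₀ + T`. -/
def localBarrier (β m k ρ κ t₀ T : ℝ) (ω : Set E) (a x : E) (t : ℝ) : ℝ :=
  barrier β m k ρ (infDist x (frontier ω)) (cutoff (κ * ((t - t₀) / T)) a ρ x)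

theorem localBarrier_le_add (hm : 0 ≤ m) (hβ : β ≤ 1) (hk : 0 ≤ k) (hρ : 0 < ρ)
    (hx : ‖x - a‖ ≤ ρ) (hκ : 0 ≤ κ) (hκlam : κ ≤ lam) (hT : ρ ^ 2 ≤ T) {s t : ℝ}
    (hs : t₀ ≤ s) (hst : s ≤ t) :
    localBarrier β m k ρ κ t₀ T ω a x s ≤ localBarrier β m k ρ κ t₀ T ω a x t +
      m * k * ρ ^ (1 - β) * (lam / ρ ^ 2) * (t - s) := by
  have hT0 : 0 < T := (pow_pos hρ 2).trans_le hT
  have : 0 ≤ s - t₀ := sub_nonneg.2 hs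
  have : 0 ≤ t - s := sub_nonneg.2 hst
  have hheight : κ * ((s - t₀) / T) ≤ κ * ((t - t₀) / T) := by gcongr
  have hrate : κ * ((t - t₀) / T) - κ * ((s - t₀) / T) ≤ lam / ρ ^ 2 * (t - s) := by
    calc κ * ((t - t₀) / T) - κ * ((s - t₀) / T) = κ / T * (t - s) := by ring
      _ ≤ lam / ρ ^ 2 * (t - s) := by gcongr; exact hκ.trans hκlam
  have hcutoff := cutoff_sub_cutoff_le hheight hρ hx
  have hmono : cutoff (κ * ((s - t₀) / T)) a ρ x ≤ cutoff (κ * ((t - t₀) / T)) a ρ x :=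
    mul_le_mul_of_nonneg_right hheight (sq_nonneg _)
  calc localBarrier β m k ρ κ t₀ T ω a x s
      ≤ localBarrier β m k ρ κ t₀ T ω a x t + m * k * ρ ^ (1 - β) *
          (cutoff (κ * ((t - t₀) / T)) a ρ x - cutoff (κ * ((s - t₀) / T)) a ρ x) :=
        barrier_le_barrier_add hm hβ hk hρ.le infDist_nonneg (cutoff_nonneg (by positivity)) hmono
    _ ≤ localBarrier β m k ρ κ t₀ T ω a x t +
          m * k * ρ ^ (1 - β) * (lam / ρ ^ 2 * (t - s)) := by
        gcongr
        exact hcutoff.trans hrate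
    _ = _ := by ring

theorem continuous_localBarrier (hm : 0 ≤ m) (hβ : β ≤ 1) :
    Continuous fun q : E × ℝ => localBarrier β m k ρ κ t₀ T ω a q.1 q.2 := by
  have hcutoff : Continuous fun q : E × ℝ => cutoff (κ * ((q.2 - t₀) / T)) a ρ q.1 :=
    continuous_cutoff.comp (f := fun q : E × ℝ => (κ * ((q.2 - t₀) / T), q.1)) (by fun_prop)
  exact (continuous_barrier hm hβ).comp
    (((continuous_infDist_pt (frontier ω)).comp continuous_fst).prodMk hcutoff)

theorem localBarrier_self_eq (hm : m ≠ 0) :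
    localBarrier β m k ρ κ t₀ T ω a x t₀ = m * k * infDist x (frontier ω) ^ (1 - β) := by
  rw [localBarrier, sub_self, zero_div, mul_zero, cutoff_zero_left, barrier_zero_right hm]

theorem localBarrier_of_norm_eq (hm : m ≠ 0) (hρ : ρ ≠ 0) (hx : ‖x - a‖ = ρ) (t : ℝ) :
    localBarrier β m k ρ κ t₀ T ω a x t = m * k * infDist x (frontier ω) ^ (1 - β) := by
  rw [localBarrier, cutoff_eq_zero_of_norm_eq hρ hx, barrier_zero_right hm]

theorem localBarrier_of_mem_frontier (hm : m * (1 - β) = 1) (hρ : 0 ≤ ρ) (hκ : 0 ≤ κ) (hT : 0 ≤ T)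
    (hx : x ∈ frontier ω) {t : ℝ} (ht : t₀ ≤ t) : localBarrier β m k ρ κ t₀ T ω a x t = 0 := by
  have := sub_nonneg.2 ht
  rw [localBarrier, infDist_zero_of_mem hx,
    barrier_zero_left hm hρ (cutoff_nonneg (by positivity))]

theorem le_profile_of_mem_closure (hβ : β ≤ 1) {v : E → ℝ → ℝ} (htt : t₀ < t₁)
    (hvc : ContinuousOn (fun q : E × ℝ => v q.1 q.2) (closure (ball a ρ ∩ ω) ×ˢ Icc t₀ t₁))
    (hle : ∀ x ∈ ball a ρ ∩ ω, ∀ t ∈ Ioo t₀ t₁, v x t ≤ m * k * infDist x (frontier ω) ^ (1 - β))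
    (hx : x ∈ closure (ball a ρ ∩ ω)) {t : ℝ} (ht : t ∈ Icc t₀ t₁) :
    v x t ≤ m * k * infDist x (frontier ω) ^ (1 - β) := by
  have hclosure : closure ((ball a ρ ∩ ω) ×ˢ Ioo t₀ t₁) =
      closure (ball a ρ ∩ ω) ×ˢ Icc t₀ t₁ := by
    rw [closure_prod_eq, closure_Ioo htt.ne]
  have hprofile :
      Continuous fun q : E × ℝ => m * k * infDist q.1 (frontier ω) ^ (1 - β) :=
    continuous_const.mul (((continuous_infDist_pt _).comp continuous_fst).rpow_const
      fun _ => .inr (sub_nonneg.2 hβ))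
  exact le_on_closure (s := (ball a ρ ∩ ω) ×ˢ Ioo t₀ t₁) (fun q hq => hle q.1 hq.1 q.2 hq.2)
    (hclosure ▸ hvc) hprofile.continuousOn
    (show (x, t) ∈ closure ((ball a ρ ∩ ω) ×ˢ Ioo t₀ t₁) from hclosure ▸ ⟨hx, ht⟩)

theorem norm_eq_or_mem_of_mem_frontier_ball_inter
    (hx : x ∈ frontier (ball a ρ ∩ ω)) : ‖x - a‖ = ρ ∨ x ∈ ball a ρ ∩ frontier ω := by
  rcases frontier_inter_subset _ _ hx with ⟨hsphere, -⟩ | ⟨hball, hω⟩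
  · exact .inl (mem_sphere_iff_norm.1 (frontier_ball_subset_sphere hsphere))
  · rcases (mem_closedBall_iff_norm.1 (closure_ball_subset_closedBall hball)).eq_or_lt with
      hsphere | hlt
    · exact .inl hsphere
    · exact .inr ⟨mem_ball_iff_norm.2 hlt, hω⟩

theorem localBarrier_le_mul (h : ProfileExponents p β m) (hk : 0 ≤ k) (hρ : 0 < ρ) (hκ : 0 < κ)
    (hT : 0 < T) (hx : ‖x - a‖ ≤ ρ / 2) {t : ℝ} (ht : t₀ < t) :
    localBarrier β m k ρ κ t₀ T ω a x t ≤ k * (κ * (9 / 16)) ^ (-(1 / (p - 2))) * ρ ^ (-β) *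
      (T / (t - t₀)) ^ (1 / (p - 2)) * infDist x (frontier ω) := by
  have : 0 < t - t₀ := sub_pos.2 ht
  have hexp : -(1 / (p - 2)) ≤ 0 := neg_nonpos.2 (one_div_nonneg.2 (sub_nonneg.2 h.two_lt.le))
  have hheight : 0 < κ * ((t - t₀) / T) * (9 / 16) := by positivity
  have hcutoff : κ * ((t - t₀) / T) * (9 / 16) ≤ cutoff (κ * ((t - t₀) / T)) a ρ x :=
    mul_le_cutoff_of_half (by positivity) hρ hx
  have hδ : 0 ≤ infDist x (frontier ω) := infDist_nonneg
  calc localBarrier β m k ρ κ t₀ T ω a x t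
      ≤ k * cutoff (κ * ((t - t₀) / T)) a ρ x ^ (-(1 / (p - 2))) * ρ ^ (-β) *
          infDist x (frontier ω) := barrier_le_mul h hk hρ hδ (hheight.trans_le hcutoff)
    _ ≤ k * (κ * ((t - t₀) / T) * (9 / 16)) ^ (-(1 / (p - 2))) * ρ ^ (-β) *
          infDist x (frontier ω) := by
        gcongr ?_ * ?_ * ?_ * ?_
        exact Real.rpow_le_rpow_of_nonpos hheight hcutoff hexp
    _ = _ := by
        rw [mul_right_comm κ, Real.mul_rpow (by positivity) (by positivity), ← inv_div T,
          ← Real.rpow_neg_eq_inv_rpow, neg_neg]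
        ring

end LocalBarrier

section BoundaryCollar

variable {E ι : Type*} [NormedAddCommGroup E] [InnerProductSpace ℝ E] [Fintype ι]
  {e : OrthonormalBasis ι ℝ E} {p β m k lam κ ρ L t₀ t₁ T : ℝ} {ω : Set E} {a x : E}

theorem exists_barrier_jet (h : ProfileExponents p β m) (hk : 0 < k) (hmlam : m * lam ≤ 1)
    (hρ : 0 < ρ) (hL : 0 ≤ L) (hgap : 2 * ρ * L < supersolutionGap p β m k lam) {d ψ : E → ℝ}
    {g q : E} {d₂ ψ₂ : ι → ℝ} (hdx : d x ∈ Ioc 0 ρ) (hg : ‖g‖ = 1)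
    (hd : ∀ i, HasSecondDerivAt (fun s : ℝ => d (x + s • e i)) ⟪g, e i⟫ (d₂ i) 0)
    (hdL : ∑ i, d₂ i ≤ L)
    (hψ : ∀ i, HasSecondDerivAt (fun s : ℝ => ψ (x + s • e i)) ⟪q, e i⟫ (ψ₂ i) 0)
    (hslow : IsSlowJet lam ρ (ψ x) q (∑ i, ψ₂ i)) :
    ∃ (W : E) (w₂ : ι → ℝ),
      (∀ i, HasSecondDerivAt (fun s : ℝ => barrier β m k ρ (d (x + s • e i)) (ψ (x + s • e i)))
        ⟪W, e i⟫ (w₂ i) 0) ∧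
      ‖W‖ ^ p < -(m * k * ρ ^ (1 - β) * (lam / ρ ^ 2)) - ∑ i, w₂ i := by
  set z := shiftedDist m ρ (d x) (ψ x) with hz
  set ζ : E := g + (ρ * m * ψ x ^ (m - 1)) • q with hζ
  set z₂ : ι → ℝ := fun i =>
    d₂ i + ρ * m * ((m - 1) * ψ x ^ (m - 2) * ⟪q, e i⟫ ^ 2 + ψ x ^ (m - 1) * ψ₂ i) with hz₂
  have hψm : ψ x ^ m ∈ Ioc 0 1 :=
    ⟨Real.rpow_pos_of_pos hslow.pos m, Real.rpow_le_one hslow.pos.le hslow.le_one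
      (zero_le_one.trans h.one_le)⟩
  have hz0 : 0 < z := add_pos hdx.1 (mul_pos hρ hψm.1)
  have hz2ρ : z ≤ 2 * ρ := by
    rw [two_mul]
    exact add_le_add hdx.2 (mul_le_of_le_one_right hρ.le hψm.2)
  have hzline (i) : HasSecondDerivAt
      (fun s : ℝ => shiftedDist m ρ (d (x + s • e i)) (ψ (x + s • e i))) ⟪ζ, e i⟫ (z₂ i) 0 := by
    refine (hasSecondDerivAt_shiftedDist (hd i) (hψ i) ?_).congr_deriv ?_ ?_
    · simpa using hslow.pos
    · simp [hζ, inner_add_left, inner_smul_left]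
    · simp [hz₂]
  have hz₂sum : ∑ i, z₂ i ≤ L + m ^ 2 * lam / ρ := by
    simp only [hz₂, Finset.sum_add_distrib, ← Finset.mul_sum, e.sum_sq_inner_left]
    exact add_le_add hdL (hslow.laplacian_shift_le h.one_le hρ)
  have hζnorm : ‖ζ‖ ∈ Icc (1 - m * lam) (1 + m * lam) := by
    have hshift := hslow.norm_shift_le h.one_le hρ
    exact ⟨by linarith [norm_sub_le_norm_add g ((ρ * m * ψ x ^ (m - 1)) • q)],
      by linarith [norm_add_le g ((ρ * m * ψ x ^ (m - 1)) • q)]⟩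
  refine ⟨(k * z ^ (-β)) • ζ - (m * k * ρ ^ (1 - β)) • q, fun i =>
    k * (-β * z ^ (-β - 1) * ⟪ζ, e i⟫ ^ 2 + z ^ (-β) * z₂ i) - m * k * ρ ^ (1 - β) * ψ₂ i,
    fun i => ?_, ?_⟩
  · refine (hasSecondDerivAt_barrier h.mul_one_sub (hzline i) (hψ i) ?_).congr_deriv ?_ ?_
    · simpa using hz0
    · simp [hz, inner_sub_left, inner_smul_left]
    · simp [hz]
  · simp only [Finset.sum_sub_distrib, ← Finset.mul_sum, Finset.sum_add_distrib,
      e.sum_sq_inner_left]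
    exact norm_barrier_gradient_rpow_lt h hk hz0 hz2ρ hmlam hζnorm hslow.norm_le hslow.abs_le
      hz₂sum hL hgap

/-- The part of `ω` in the ball of radius `ρ` about the boundary point `a` is a collar on which the
distance to the boundary is `C²` with Laplacian at most `L`. -/
structure IsBoundaryCollar (e : OrthonormalBasis ι ℝ E) (ω : Set E) (a : E) (ρ L : ℝ) : Prop where
  isOpen : IsOpen ω
  mem_frontier : a ∈ frontier ω
  pos : 0 < ρ
  contDiffOn : ContDiffOn ℝ 2 (fun x => infDist x (frontier ω)) (ball a ρ ∩ ω)
  laplacian_le : ∀ x ∈ ball a ρ ∩ ω,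
    ∑ i, fderiv ℝ (fun y => fderiv ℝ (fun x => infDist x (frontier ω)) y (e i)) x (e i) ≤ L

theorem IsBoundaryCollar.infDist_mem_Ioc (hω : IsBoundaryCollar e ω a ρ L)
    (hx : x ∈ ball a ρ ∩ ω) : infDist x (frontier ω) ∈ Ioc 0 ρ := by
  have hxω : x ∉ frontier ω := fun h => h.2 (hω.isOpen.interior_eq.symm ▸ hx.2)
  exact ⟨(isClosed_frontier.notMem_iff_infDist_pos ⟨a, hω.mem_frontier⟩).1 hxω,
    (infDist_le_dist_of_mem hω.mem_frontier).trans hx.1.le⟩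

theorem IsBoundaryCollar.isStrictSupersolutionAt_localBarrier [ProperSpace E]
    (hω : IsBoundaryCollar e ω a ρ L) (h : ProfileExponents p β m) (hk : 0 < k) (hlam : lam ≤ 1)
    (hmlam : m * lam ≤ 1) (hL : 0 ≤ L) (hgap : 2 * ρ * L < supersolutionGap p β m k lam)
    (hκ : 0 < κ) (hκlam : (16 + 4 * Fintype.card ι) * κ ≤ lam) (hT : ρ ^ 2 ≤ T)
    (hx : x ∈ ball a ρ ∩ ω) {t : ℝ} (ht : t₀ < t) (htT : t ≤ t₀ + T) :
    IsStrictSupersolutionAt e p (localBarrier β m k ρ κ t₀ T ω a) t₀ x t := by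
  have hρ := hω.pos
  have hT0 : 0 < T := (pow_pos hρ 2).trans_le hT
  have hxa : ‖x - a‖ < ρ := mem_ball_iff_norm.1 hx.1
  have hδ : ContDiffAt ℝ 2 (fun x => infDist x (frontier ω)) x :=
    hω.contDiffOn.contDiffAt ((isOpen_ball.inter hω.isOpen).mem_nhds hx)
  have hdist := hω.infDist_mem_Ioc hx
  have hxω : x ∉ frontier ω := fun h => hdist.1.ne' (infDist_zero_of_mem h)
  have hgrad : ‖gradient (fun x => infDist x (frontier ω)) x‖ = 1 := by
    rw [gradient, LinearIsometryEquiv.norm_map]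
    exact norm_eq_one_of_hasFDerivAt_infDist isClosed_frontier ⟨a, hω.mem_frontier⟩ hxω
      (hδ.differentiableAt two_ne_zero).hasFDerivAt
  have hheight : κ * ((t - t₀) / T) ∈ Ioc 0 κ :=
    ⟨mul_pos hκ (div_pos (sub_pos.2 ht) hT0),
      mul_le_of_le_one_right hκ.le ((div_le_one hT0).2 (by linarith))⟩
  have hslow := isSlowJet_cutoff e hheight.1
    ((mul_le_mul_of_nonneg_left hheight.2 (by positivity)).trans hκlam) hlam hρ hxa
  obtain ⟨W, w₂, hjet, hstrict⟩ := exists_barrier_jet (d := fun x => infDist x (frontier ω))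
    (ψ := cutoff (κ * ((t - t₀) / T)) a ρ) h hk hmlam hρ hL hgap hdist hgrad
    (fun i => .of_contDiffAt_line hδ (e i)) (hω.laplacian_le x hx)
    (fun i => hasSecondDerivAt_cutoff_line (e i)) hslow
  have hcard : 0 ≤ (Fintype.card ι : ℝ) * κ := by positivity
  exact ⟨_, W, w₂, fun s hs => localBarrier_le_add (zero_le_one.trans h.one_le) h.beta_lt_one.le
    hk.le hρ hxa.le hκ.le (by linarith) hT hs.1 hs.2, hjet, hstrict⟩

theorem IsBoundaryCollar.le_localBarrier [ProperSpace E] (hω : IsBoundaryCollar e ω a ρ L)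
    (h : ProfileExponents p β m) (hk : 0 < k) (hlam : lam ≤ 1) (hmlam : m * lam ≤ 1) (hL : 0 ≤ L)
    (hgap : 2 * ρ * L < supersolutionGap p β m k lam) (hκ : 0 < κ)
    (hκlam : (16 + 4 * Fintype.card ι) * κ ≤ lam) (hT : ρ ^ 2 ≤ T) (htT : t₁ - t₀ ≤ T)
    {v : E → ℝ → ℝ} {G : E → ℝ → E} {H : E → ℝ → E →L[ℝ] E} {v' : E → ℝ → ℝ}
    (hv : IsClassicalSubsolution e p (ball a ρ ∩ ω) (Ioo t₀ t₁) v G H v')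
    (hvc : ContinuousOn (fun q : E × ℝ => v q.1 q.2) (closure (ball a ρ ∩ ω) ×ˢ Icc t₀ t₁))
    (hv0 : ∀ b ∈ ball a ρ ∩ frontier ω, ∀ t ∈ Ioo t₀ t₁, v b t ≤ 0)
    (hle : ∀ x ∈ ball a ρ ∩ ω, ∀ t ∈ Ioo t₀ t₁, v x t ≤ m * k * infDist x (frontier ω) ^ (1 - β))
    (hx : x ∈ ball a ρ ∩ ω) {t : ℝ} (ht : t ∈ Ioo t₀ t₁) :
    v x t ≤ localBarrier β m k ρ κ t₀ T ω a x t := by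
  have hm : 0 < m := one_pos.trans_le h.one_le
  have hT0 : 0 < T := (pow_pos hω.pos 2).trans_le hT
  have hprofile {y} (hy : y ∈ closure (ball a ρ ∩ ω)) {s} (hs : s ∈ Icc t₀ t₁) :=
    le_profile_of_mem_closure h.beta_lt_one.le (ht.1.trans ht.2) hvc hle hy hs
  refine hv.le_of_isStrictSupersolutionAt (w := localBarrier β m k ρ κ t₀ T ω a)
    (isOpen_ball.inter hω.isOpen) (isBounded_ball.subset inter_subset_left) ?_ hvc
    (continuous_localBarrier hm.le h.beta_lt_one.le).continuousOn ?_ ?_ (subset_closure hx) ht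
  · intro y hy s hs
    exact hω.isStrictSupersolutionAt_localBarrier h hk hlam hmlam hL hgap hκ hκlam hT hy hs.1
      (by linarith [hs.2])
  · intro y hy
    rw [localBarrier_self_eq hm.ne']
    exact hprofile hy ⟨le_rfl, (ht.1.trans ht.2).le⟩
  · intro y hy s hs
    rcases norm_eq_or_mem_of_mem_frontier_ball_inter hy with hsphere | hboundary
    · rw [localBarrier_of_norm_eq hm.ne' hω.pos.ne' hsphere]
      exact hprofile (frontier_subset_closure hy) (Ioo_subset_Icc_self hs)
    · rw [localBarrier_of_mem_frontier h.mul_one_sub hω.pos.le hκ.le hT0.le hboundary.2 hs.1.le]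
      exact hv0 y hboundary s hs

end BoundaryCollar

theorem stmt16_general {E ι : Type*} [NormedAddCommGroup E] [InnerProductSpace ℝ E] [ProperSpace E]
    [Fintype ι] (e : OrthonormalBasis ι ℝ E) {p β k : ℝ} (hp : 2 < p) (hβ : β = 1 / (p - 1))
    (hk : k ∈ Ioo 0 (β ^ β)) :
    ∃ c > (0 : ℝ), ∀ L > (0 : ℝ), ∃ ρ₀ > (0 : ℝ), ∀ (ω : Set E) (a : E) (ρ : ℝ),
      IsBoundaryCollar e ω a ρ L → ρ ≤ ρ₀ →
      ∀ (t₀ t₁ : ℝ) (v : E → ℝ → ℝ) (G : E → ℝ → E) (H : E → ℝ → E →L[ℝ] E) (v' : E → ℝ → ℝ),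
      ContinuousOn (fun q : E × ℝ => v q.1 q.2) (closure (ball a ρ ∩ ω) ×ˢ Icc t₀ t₁) →
      IsClassicalSubsolution e p (ball a ρ ∩ ω) (Ioo t₀ t₁) v G H v' →
      (∀ b ∈ ball a ρ ∩ frontier ω, ∀ t ∈ Ioo t₀ t₁, v b t = 0) →
      (∀ x ∈ ball a ρ ∩ ω, ∀ t ∈ Ioo t₀ t₁,
        v x t ≤ (1 - β)⁻¹ * k * infDist x (frontier ω) ^ (1 - β)) →
      ∀ b ∈ ball a (ρ / 2) ∩ frontier ω, ∀ t ∈ Ioo t₀ t₁, ∀ g : E,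
      HasGradientWithinAt (fun y => v y t) g ω b →
      ∀ ν : E, ‖ν‖ ≤ 1 → (∀ᶠ s in 𝓝[>] (0 : ℝ), b + s • ν ∈ ω) →
      ⟪g, ν⟫ ≤ c * ρ ^ (-β) * ((t₁ - t₀ + ρ ^ 2) / (t - t₀)) ^ (1 / (p - 2)) := by
  have h := ProfileExponents.of_eq_one_div hp hβ
  obtain ⟨lam, hlam0, hlam1, hmlam, hgap⟩ :=
    exists_supersolutionGap_pos (m := (1 - β)⁻¹) (by linarith) (h.rpow_sub_one_lt hk)
  have hk0 : 0 < k := hk.1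
  obtain ⟨κ, hκ, hκlam⟩ : ∃ κ > 0, (16 + 4 * Fintype.card ι) * κ ≤ lam :=
    ⟨lam / (16 + 4 * Fintype.card ι), by positivity, by field_simp; rfl⟩
  refine ⟨k * (κ * (9 / 16)) ^ (-(1 / (p - 2))), by positivity, fun L hL =>
    ⟨supersolutionGap p β (1 - β)⁻¹ k lam / (4 * L), by positivity, ?_⟩⟩
  intro ω a ρ hω hρ₀ t₀ t₁ v G H v' hvc hv hv0 hle b hb t ht g hg ν hν hνω
  have hρ := hω.pos
  have hT : ρ ^ 2 ≤ t₁ - t₀ + ρ ^ 2 := by linarith [ht.1.trans ht.2]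
  have hT0 : 0 < t₁ - t₀ + ρ ^ 2 := (pow_pos hρ 2).trans_le hT
  have ht0 : 0 < t - t₀ := sub_pos.2 ht.1
  have hgapL : 2 * ρ * L < supersolutionGap p β (1 - β)⁻¹ k lam := by
    rw [le_div_iff₀ (by positivity)] at hρ₀
    linarith
  have hhalf : ball a (ρ / 2) ⊆ ball a ρ := ball_subset_ball (half_le_self hρ.le)
  refine inner_le_of_le_add_mul_infDist hg hb.2 (by positivity) hν hνω ?_
  filter_upwards [self_mem_nhdsWithin, mem_nhdsWithin_of_mem_nhds (isOpen_ball.mem_nhds hb.1)]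
    with x hxω hxball
  calc v x t ≤ localBarrier β (1 - β)⁻¹ k ρ κ t₀ (t₁ - t₀ + ρ ^ 2) ω a x t :=
        hω.le_localBarrier h hk0 hlam1 hmlam hL.le hgapL hκ hκlam hT (by linarith [sq_nonneg ρ])
          hv hvc (fun y hy s hs => (hv0 y hy s hs).le) hle ⟨hhalf hxball, hxω⟩ ht
    _ ≤ _ := localBarrier_le_mul h hk0.le hρ hκ hT0 (mem_ball_iff_norm.1 hxball).le ht.1
    _ = v b t + _ := by rw [hv0 b ⟨hhalf hb.1, hb.2⟩ t ht, zero_add]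

theorem stmt16 {n : ℕ} (hn : 1 ≤ n)
    (p β dp : ℝ) (hp : 2 < p) (hβ : β = 1 / (p - 1)) (hdp : dp = β ^ β)
    (k : ℝ) (hk : k ∈ Ioo 0 dp) :
    -- c = c(n,p,k)
    ∃ c > (0 : ℝ),
    -- ρ₀ = ρ₀(n,p,k,L)
    ∀ L > (0 : ℝ), ∃ ρ₀ > (0 : ℝ),
    ∀ ω : Set (EuclideanSpace ℝ (Fin n)), IsOpen ω → Bornology.IsBounded ω → IsC2Boundary ω →
    ∀ a ∈ frontier ω, ∀ ρ : ℝ, 0 < ρ → ρ ≤ ρ₀ →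
    ∀ δ : EuclideanSpace ℝ (Fin n) → ℝ, (∀ x, δ x = infDist x (frontier ω)) →
    -- δ is C² on the closure of D = B_ρ(a) ∩ ω, with ‖Δδ‖_{L^∞(D)} ≤ L
    ContDiffOn ℝ 2 δ (closure (ball a ρ ∩ ω)) →
    (∀ x ∈ ball a ρ ∩ ω,
      |∑ i : Fin n, fderiv ℝ (fun y => fderiv ℝ δ y (EuclideanSpace.single i (1 : ℝ))) x
        (EuclideanSpace.single i (1 : ℝ))| ≤ L) →
    -- the inward unit normal field on ∂ω
    ∀ νB : EuclideanSpace ℝ (Fin n) → EuclideanSpace ℝ (Fin n),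
    (∀ b ∈ frontier ω, ‖νB b‖ = 1 ∧
      ∃ s₀ > (0 : ℝ), ∀ s ∈ Ioo (0 : ℝ) s₀, b + s • νB b ∈ ω ∧ δ (b + s • νB b) = s) →
    ∀ t₀ t₁ : ℝ, t₀ < t₁ →
    ∀ (v : EuclideanSpace ℝ (Fin n) → ℝ → ℝ) (Gv : EuclideanSpace ℝ (Fin n) → ℝ → EuclideanSpace ℝ (Fin n)) (Hv : EuclideanSpace ℝ (Fin n) → ℝ → (EuclideanSpace ℝ (Fin n) →L[ℝ] EuclideanSpace ℝ (Fin n)))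
      (v' : EuclideanSpace ℝ (Fin n) → ℝ → ℝ),
    -- v, its first and second spatial derivatives and its first time derivative are
    -- continuous on ω̄ × [t₀, t₁]
    ContinuousOn (fun q : EuclideanSpace ℝ (Fin n) × ℝ => (v q.1 q.2, Gv q.1 q.2, Hv q.1 q.2, v' q.1 q.2))
      (closure ω ×ˢ Icc t₀ t₁) →
    (∀ t ∈ Icc t₀ t₁, ∀ x ∈ closure ω,
      HasGradientWithinAt (fun y => v y t) (Gv x t) (closure ω) x) →
    (∀ t ∈ Icc t₀ t₁, ∀ x ∈ closure ω,
      HasFDerivWithinAt (fun y => Gv y t) (Hv x t) (closure ω) x) →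
    (∀ x ∈ closure ω, ∀ t ∈ Icc t₀ t₁,
      HasDerivWithinAt (fun s => v x s) (v' x t) (Icc t₀ t₁) t) →
    -- vₜ - Δv ≤ |∇v|^p in ω × (t₀, t₁)
    (∀ x ∈ ω, ∀ t ∈ Ioo t₀ t₁,
      v' x t - ∑ i : Fin n, ⟪Hv x t (EuclideanSpace.single i (1 : ℝ)),
        EuclideanSpace.single i (1 : ℝ)⟫ ≤ ‖Gv x t‖ ^ p) →
    -- v = 0 on ∂ω × (t₀, t₁)
    (∀ b ∈ frontier ω, ∀ t ∈ Ioo t₀ t₁, v b t = 0) →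
    -- hypothesis (7.7)
    (∀ x ∈ ball a ρ ∩ ω, ∀ t ∈ Ioo t₀ t₁, v x t ≤ (1 - β)⁻¹ * k * (δ x) ^ (1 - β)) →
    -- conclusion
    ∀ b ∈ ball a (ρ / 2) ∩ frontier ω, ∀ t ∈ Ioo t₀ t₁,
      ⟪Gv b t, νB b⟫ ≤ c * ρ ^ (-(1 / (p - 1))) *
        ((t₁ - t₀ + ρ ^ 2) / (t - t₀)) ^ (1 / (p - 2)) := by
  subst hdp hβ
  obtain ⟨c, hc, hbound⟩ := stmt16_general (EuclideanSpace.basisFun (Fin n) ℝ) hp rfl hk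
  refine ⟨c, hc, fun L hL => (hbound L hL).imp fun ρ₀ ⟨hρ₀, hbound⟩ => ⟨hρ₀, ?_⟩⟩
  intro ω hω _ _ a ha ρ hρ hρle δ hδ hδ₂ hlap νB hν t₀ t₁ _ v G H v' hcont hG hH hv' hsub hv0 hle
    b hb t ht
  obtain rfl : δ = fun x => infDist x (frontier ω) := funext hδ
  have hcollar : IsBoundaryCollar (EuclideanSpace.basisFun (Fin n) ℝ) ω a ρ L :=
    ⟨hω, ha, hρ, hδ₂.mono subset_closure,
      fun x hx => by simpa using (le_abs_self _).trans (hlap x hx)⟩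
  have hsubsolution : IsClassicalSubsolution (EuclideanSpace.basisFun (Fin n) ℝ) p (ball a ρ ∩ ω)
      (Ioo t₀ t₁) v G H v' :=
    .of_hasDerivWithinAt (fun x hx => mem_of_superset (hω.mem_nhds hx.2) subset_closure) hG hH hv'
      fun x hx t ht => by simpa using hsub x hx.2 t ht
  have hgrad : HasGradientWithinAt (fun y => v y t) (G b t) ω b :=
    (hG t (Ioo_subset_Icc_self ht) b (frontier_subset_closure hb.2)).hasFDerivWithinAt.mono
      subset_closure
  obtain ⟨hνb, s₀, hs₀, hray⟩ := hν b hb.2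
  exact hbound ω a ρ hcollar hρle t₀ t₁ v G H v'
    (hcont.fst.mono (prod_mono_left (closure_mono inter_subset_right))) hsubsolution
    (fun b hb => hv0 b hb.2) hle b hb t ht (G b t) hgrad (νB b) hνb.le
    (eventually_of_mem (Ioo_mem_nhdsGT hs₀) fun s hs => (hray s hs).1)
end
end

section
/- There exists a constant C = C(n, p) > 0 with the following property. Let p > 2, let ω be any open subset of ℝⁿ, x₀ ∈ ∂ω, R > 0, t₀ < t₁, and let v, its first and second spatial derivatives and its first time derivative be continuous on (closure(B_R(x₀)) ∩ closure(ω)) × [t₀, t₁], with v_t − Δv = |∇v|^p in (B_R(x₀) ∩ ω) × (t₀, t₁) and v = 0 on (B_R(x₀) ∩ ∂ω) × (t₀, t₁). If |∇v| ≤ N on (B_R(x₀) ∩ ∂ω) × [t₀, t₁] and |v_t| ≤ M in (B_R(x₀) ∩ ω) × [t₀, t₁] for some M, N > 0, then |∇v(x,t)| ≤ C [N + M^{1/p} + R^{−1/(p−1)} + (t − t₀)^{−1/(2(p−1))}] for all (x,t) ∈ (B_{R/2}(x₀) ∩ ω) × (t₀, t₁). -/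
open Set Metric Filter RealInnerProductSpace

noncomputable section

/-!
Bernstein's method: at an interior maximum of `|∇v|² - φ` the equation gives
`2 |D²v|² ≤ p |∇v|^(p-2) ⟪∇v, ∇φ⟫ + Δφ - φ_t`, while `n |D²v|² ≥ (Δv)² = (v_t - |∇v|^p)²`. The
barrier `φ = A ρ^(-2/(p-1)) + A (t - t₀)^(-1/(p-1)) + N² + (2M)^(2/p)`, with `ρ` comparable to the
distance to `∂B_R(x₀)`, has the scaling of `|∇v|²`, so wherever `φ ≤ |∇v|²` the right-hand side is
at most `ε(A) |∇v|^(2p)` with `ε(A) → 0` as `A → ∞`. Since `φ < |∇v|²` also forces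
`v_t ≤ M < |∇v|^p / 2`, the two inequalities are incompatible for large `A`; hence `|∇v|² ≤ φ`,
because `φ` is infinite at `∂B_R(x₀)` and at time `t₀` and exceeds `N²` on `∂ω`.

As `v` has no third derivatives, the maximum principle is applied to the sums of squared difference
quotients `∑ (δₕ v)²` in place of `|∇v|²`: a limit of their maximum points is a maximum point of
`|∇v|² - φ`, and the inequality between difference quotients at those points passes to the limit.
-/

open InnerProductSpace
open scoped Topology

theorem nonpos_of_hasDerivAt_of_isLocalMax {f f' : ℝ → ℝ} {c t : ℝ} (hmax : IsLocalMax f t)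
    (hf : ∀ᶠ s in 𝓝 t, HasDerivAt f (f' s) s) (hf' : HasDerivAt f' c t) : c ≤ 0 := by
  by_contra! hc
  have hderiv : deriv f =ᶠ[𝓝 t] f' := hf.mono fun s hs => hs.deriv
  have hmin : IsLocalMin f t := by
    refine isLocalMin_of_deriv_deriv_pos ?_ hmax.deriv_eq_zero hf.self_of_nhds.continuousAt
    rwa [hderiv.deriv_eq, hf'.deriv]
  have hconst : f =ᶠ[𝓝 t] fun _ => f t := by
    filter_upwards [hmax, hmin] with s h₁ h₂ using le_antisymm h₁ h₂
  have hzero : f' =ᶠ[𝓝 t] fun _ => 0 := by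
    filter_upwards [hconst.eventuallyEq_nhds, hf] with s hs hfs
    exact hfs.unique ((hasDerivAt_const s _).congr_of_eventuallyEq hs)
  exact hc.ne (hf'.unique ((hasDerivAt_const t (0 : ℝ)).congr_of_eventuallyEq hzero)).symm

theorem nonneg_of_hasDerivAt_of_isLocalMaxOn_Iic {f : ℝ → ℝ} {c t : ℝ}
    (hmax : IsLocalMaxOn f (Iic t) t) (hf : HasDerivAt f c t) : 0 ≤ c := by
  have hcone : (-1 : ℝ) ∈ posTangentConeAt (Iic t) t := by
    refine mem_posTangentConeAt_of_segment_subset ((convex_Iic t).segment_subset ?_ ?_) <;> simp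
  simpa using hmax.hasFDerivWithinAt_nonpos hf.hasFDerivAt.hasFDerivWithinAt hcone

theorem exists_isMaxOn_and_frequently_isMaxOn {X ι : Type*} [TopologicalSpace X] {K : Set X}
    (hK : IsCompact K) (hne : K.Nonempty) {l : Filter ι} [l.NeBot] {F : ι → X → ℝ} {f : X → ℝ}
    (hF : ∀ᶠ i in l, ContinuousOn (F i) K)
    (hlim : ∀ z ∈ K, Tendsto (fun a : ι × X => F a.1 a.2) (l ×ˢ 𝓝 z) (𝓝 (f z))) :
    ∃ z ∈ K, IsMaxOn f K z ∧ ∃ᶠ a in l ×ˢ 𝓝 z, a.2 ∈ K ∧ IsMaxOn (F a.1) K a.2 := by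
  obtain ⟨z, hzK, hz⟩ :
      ∃ z ∈ K, ∃ᶠ a in l ×ˢ 𝓝 z, a.2 ∈ K ∧ IsMaxOn (F a.1) K a.2 := by
    by_contra! hno
    have hcover : ∀ᶠ i in l, ∀ x ∈ K, ¬IsMaxOn (F i) K x := by
      have := Eventually.curry (hK.mem_prod_nhdsSet_of_forall hno)
      exact this.mono fun i hi x hx => hi.self_of_nhdsSet x hx hx
    obtain ⟨i, hi, hFi⟩ := (hcover.and hF).exists
    obtain ⟨x, hxK, hx⟩ := hK.exists_isMaxOn hne hFi
    exact hi x hxK hx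
  refine ⟨z, hzK, fun y hy => ?_, hz⟩
  have hy' : Tendsto (fun a : ι × X => F a.1 y) (l ×ˢ 𝓝 z) (𝓝 (f y)) :=
    (hlim y hy).comp (tendsto_fst.prodMk tendsto_const_nhds)
  exact le_of_tendsto_of_tendsto_of_frequently hy' (hlim z hzK) (hz.mono fun a ha => ha.2 hy)

section DiffQuot

variable {E F : Type*} [NormedAddCommGroup E] [NormedSpace ℝ E] [NormedAddCommGroup F]
  [NormedSpace ℝ F]

/-- The difference quotient `h⁻¹ (f (x + h e, t) - f (x, t))` in the spatial direction `e`, which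
stands in for `∂ₑ f` where the latter is not known to be differentiable. -/
def spatialDiffQuot (h : ℝ) (e : E) (f : E × ℝ → F) (q : E × ℝ) : F :=
  h⁻¹ • (f (q.1 + h • e, q.2) - f q)

theorem norm_spatialDiffQuot_sub_le {f : E × ℝ → F} {f' : E × ℝ → E →L[ℝ] F} {e : E} {c : F}
    {h r ε : ℝ} {q : E × ℝ} (hh0 : h ≠ 0) (hh : h ∈ ball 0 r)
    (hf : ∀ s ∈ ball (0 : ℝ) r,
      HasFDerivAt (fun y => f (y, q.2)) (f' (q.1 + s • e, q.2)) (q.1 + s • e))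
    (hf' : ∀ s ∈ ball (0 : ℝ) r, ‖f' (q.1 + s • e, q.2) e - c‖ ≤ ε) :
    ‖spatialDiffQuot h e f q - c‖ ≤ ε := by
  have hderiv : ∀ s ∈ ball (0 : ℝ) r, HasDerivWithinAt
      (fun s : ℝ => f (q.1 + s • e, q.2) - s • c) (f' (q.1 + s • e, q.2) e - c) (ball 0 r) s := by
    intro s hs
    have hline : HasDerivAt (fun s : ℝ => q.1 + s • e) e s := by
      simpa using ((hasDerivAt_id s).smul_const e).const_add q.1
    have := ((hf s hs).comp_hasDerivAt s hline).sub ((hasDerivAt_id s).smul_const c)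
    simpa using! this.hasDerivWithinAt
  have hmvt := (convex_ball (0 : ℝ) r).norm_image_sub_le_of_norm_hasDerivWithin_le hderiv hf'
    (mem_ball_self (pos_of_mem_ball hh)) hh
  have hsplit : spatialDiffQuot h e f q - c =
      h⁻¹ • (f (q.1 + h • e, q.2) - h • c - (f (q.1 + (0 : ℝ) • e, q.2) - (0 : ℝ) • c)) := by
    simp only [spatialDiffQuot, smul_sub, inv_smul_smul₀ hh0, zero_smul, add_zero, sub_zero]
    abel
  rw [hsplit, norm_smul, norm_inv, inv_mul_le_iff₀ (norm_pos_iff.2 hh0)]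
  simpa [mul_comm] using hmvt

theorem tendsto_spatialDiffQuot {O : Set (E × ℝ)} (hO : IsOpen O) {f : E × ℝ → F}
    {f' : E × ℝ → E →L[ℝ] F} (hf : ∀ q ∈ O, HasFDerivAt (fun y => f (y, q.2)) (f' q) q.1)
    (hf' : ContinuousOn f' O) {q : E × ℝ} (hq : q ∈ O) (e : E) :
    Tendsto (fun a : ℝ × (E × ℝ) => spatialDiffQuot a.1 e f a.2) (𝓝[≠] 0 ×ˢ 𝓝 q)
      (𝓝 (f' q e)) := by
  refine nhds_basis_closedBall.tendsto_right_iff.2 fun ε hε => ?_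
  have hnear : ∀ᶠ q' in 𝓝 q, q' ∈ O ∧ ‖f' q' e - f' q e‖ < ε := by
    have hcont := (hf'.continuousAt (hO.mem_nhds hq)).clm_apply (continuousAt_const (y := e))
    filter_upwards [hO.mem_nhds hq, Metric.tendsto_nhds.1 hcont ε hε] with q' h₁ h₂
    exact ⟨h₁, by rwa [← dist_eq_norm]⟩
  have hshift : Tendsto (fun a : ℝ × (E × ℝ) => (a.2.1 + a.1 • e, a.2.2)) (𝓝 (0, q)) (𝓝 q) := by
    have : Continuous fun a : ℝ × (E × ℝ) => (a.2.1 + a.1 • e, a.2.2) := by fun_prop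
    simpa using this.tendsto (0, q)
  obtain ⟨r, hr, hball⟩ := Metric.eventually_nhds_iff_ball.1 (hshift.eventually hnear)
  have hsmall : ∀ᶠ a in 𝓝[≠] (0 : ℝ) ×ˢ 𝓝 q, (a.1 ≠ 0 ∧ a.1 ∈ ball 0 r) ∧ a.2 ∈ ball q r :=
    Eventually.prod_mk
      (eventually_mem_nhdsWithin.and (mem_nhdsWithin_of_mem_nhds (ball_mem_nhds 0 hr)))
      (ball_mem_nhds q hr)
  filter_upwards [hsmall] with ⟨h, x, t⟩ ⟨⟨hh0, hh⟩, hx⟩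
  have hseg : ∀ s ∈ ball (0 : ℝ) r, (x + s • e, t) ∈ O ∧ ‖f' (x + s • e, t) e - f' q e‖ < ε :=
    fun s hs => hball (s, x, t) (ball_prod_same (0 : ℝ) q r ▸ mk_mem_prod hs hx)
  rw [mem_closedBall, dist_eq_norm]
  exact norm_spatialDiffQuot_sub_le hh0 hh (fun s hs => hf _ (hseg s hs).1)
    fun s hs => (hseg s hs).2.le

theorem eventually_forall_add_smul_mem_of_isCompact {K O : Set (E × ℝ)} (hK : IsCompact K)
    (hO : IsOpen O) (hKO : K ⊆ O) (e : E) : ∀ᶠ h in 𝓝 (0 : ℝ), ∀ q ∈ K, (q.1 + h • e, q.2) ∈ O := by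
  refine hK.eventually_forall_of_forall_eventually fun q hq => ?_
  have : Continuous fun a : ℝ × (E × ℝ) => (a.2.1 + a.1 • e, a.2.2) := by fun_prop
  exact this.continuousAt.eventually (hO.mem_nhds (by simpa using hKO hq))

end DiffQuot

/-! ### Functions with parabolic derivatives -/

theorem continuous_mul_norm_rpow_smul_innerSL {E : Type*} [NormedAddCommGroup E]
    [InnerProductSpace ℝ E] {p : ℝ} (hp : 1 < p) :
    Continuous fun x : E => (p * ‖x‖ ^ (p - 2)) • innerSL ℝ x := by
  rw [← funext fun x : E => fderiv_norm_rpow x hp]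
  exact (contDiff_norm_rpow hp).continuous_fderiv one_ne_zero

section SecondOrder

variable {E : Type*} [NormedAddCommGroup E] [InnerProductSpace ℝ E] [CompleteSpace E]

theorem inner_apply_self_nonpos_of_isLocalMax {f : E → ℝ} {g : E → E} {T : E →L[ℝ] E} {x : E}
    (hmax : IsLocalMax f x) (hf : ∀ᶠ y in 𝓝 x, HasGradientAt f (g y) y)
    (hg : HasFDerivAt g T x) (e : E) : ⟪e, T e⟫ ≤ 0 := by
  have hline (s : ℝ) : HasDerivAt (fun s : ℝ => x + s • e) e s := by
    simpa using ((hasDerivAt_id s).smul_const e).const_add x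
  have hline0 : Tendsto (fun s : ℝ => x + s • e) (𝓝 0) (𝓝 x) := by
    simpa using (hline 0).continuousAt.tendsto
  refine nonpos_of_hasDerivAt_of_isLocalMax (f := fun s => f (x + s • e))
    (f' := fun s => ⟪e, g (x + s • e)⟫) (t := 0) ?_ ?_ ?_
  · simpa [IsLocalMax, IsMaxFilter] using hline0.eventually hmax
  · filter_upwards [hline0.eventually hf] with s hs
    simpa [real_inner_comm, Function.comp_def] using!
      hs.hasFDerivAt.comp_hasDerivAt s (hline s)
  · have := HasFDerivAt.comp_hasDerivAt_of_eq (0 : ℝ) hg (hline 0) (by simp)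
    simpa using (hasDerivAt_const (0 : ℝ) e).inner ℝ this

end SecondOrder

section Parabolic

variable {E : Type*} [NormedAddCommGroup E] [InnerProductSpace ℝ E] [FiniteDimensional ℝ E]

/-- The trace of an operator, as a continuous linear functional; applied to a Hessian it gives the
Laplacian. -/
def traceCLM : (E →L[ℝ] E) →L[ℝ] ℝ :=
  LinearMap.toContinuousLinearMap (LinearMap.trace ℝ E ∘ₗ ContinuousLinearMap.coeLM ℝ)

theorem traceCLM_eq_sum_inner {ι : Type*} [Fintype ι] (b : OrthonormalBasis ι ℝ E)
    (T : E →L[ℝ] E) : traceCLM T = ∑ i, ⟪b i, T (b i)⟫ :=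
  LinearMap.trace_eq_sum_inner (T : E →ₗ[ℝ] E) b

theorem traceCLM_rankOne (x y : E) : traceCLM (rankOne ℝ x y) = ⟪y, x⟫ :=
  trace_rankOne x y

/-- The function `u` of `(x, t)` has spatial gradient `G`, spatial Hessian `H` and time derivative
`u'` at every point of `O`. Continuity of these derivatives is not included. -/
structure HasParabolicDerivsOn (O : Set (E × ℝ)) (u : E × ℝ → ℝ) (G : E × ℝ → E)
    (H : E × ℝ → E →L[ℝ] E) (u' : E × ℝ → ℝ) : Prop where
  gradient : ∀ q ∈ O, HasGradientAt (fun y => u (y, q.2)) (G q) q.1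
  hessian : ∀ q ∈ O, HasFDerivAt (fun y => G (y, q.2)) (H q) q.1
  time : ∀ q ∈ O, HasDerivAt (fun s => u (q.1, s)) (u' q) q.2

/-- The function `u` of `(x, t)` is of class `C^{2,1}` on `O`, with spatial gradient `G`, spatial
Hessian `H` and time derivative `u'`. -/
structure IsC21On (O : Set (E × ℝ)) (u : E × ℝ → ℝ) (G : E × ℝ → E) (H : E × ℝ → E →L[ℝ] E)
    (u' : E × ℝ → ℝ) : Prop extends HasParabolicDerivsOn O u G H u' where
  continuousOn : ContinuousOn (fun q => (u q, G q, H q, u' q)) O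

namespace HasParabolicDerivsOn

variable {O : Set (E × ℝ)} {u u' : E × ℝ → ℝ} {G : E × ℝ → E} {H : E × ℝ → E →L[ℝ] E}
  {w w' : E × ℝ → ℝ} {Gw : E × ℝ → E} {Hw : E × ℝ → E →L[ℝ] E}

theorem mono {O' : Set (E × ℝ)} (hu : HasParabolicDerivsOn O u G H u') (h : O' ⊆ O) :
    HasParabolicDerivsOn O' u G H u' :=
  ⟨fun q hq => hu.gradient q (h hq), fun q hq => hu.hessian q (h hq),
    fun q hq => hu.time q (h hq)⟩

theorem add (hu : HasParabolicDerivsOn O u G H u') (hw : HasParabolicDerivsOn O w Gw Hw w') :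
    HasParabolicDerivsOn O (u + w) (G + Gw) (H + Hw) (u' + w') where
  gradient q hq := by
    rw [hasGradientAt_iff_hasFDerivAt, Pi.add_apply, map_add]
    exact (hu.gradient q hq).hasFDerivAt.add (hw.gradient q hq).hasFDerivAt
  hessian q hq := (hu.hessian q hq).add (hw.hessian q hq)
  time q hq := (hu.time q hq).add (hw.time q hq)

theorem sub (hu : HasParabolicDerivsOn O u G H u') (hw : HasParabolicDerivsOn O w Gw Hw w') :
    HasParabolicDerivsOn O (u - w) (G - Gw) (H - Hw) (u' - w') where
  gradient q hq := by
    rw [hasGradientAt_iff_hasFDerivAt, Pi.sub_apply, map_sub]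
    exact (hu.gradient q hq).hasFDerivAt.sub (hw.gradient q hq).hasFDerivAt
  hessian q hq := (hu.hessian q hq).sub (hw.hessian q hq)
  time q hq := (hu.time q hq).sub (hw.time q hq)

theorem sum {ι : Type*} {s : Finset ι} {u u' : ι → E × ℝ → ℝ} {G : ι → E × ℝ → E}
    {H : ι → E × ℝ → E →L[ℝ] E}
    (hu : ∀ i ∈ s, HasParabolicDerivsOn O (u i) (G i) (H i) (u' i)) :
    HasParabolicDerivsOn O (fun q => ∑ i ∈ s, u i q) (fun q => ∑ i ∈ s, G i q)
      (fun q => ∑ i ∈ s, H i q) (fun q => ∑ i ∈ s, u' i q) where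
  gradient q hq := by
    rw [hasGradientAt_iff_hasFDerivAt, map_sum]
    exact HasFDerivAt.fun_sum fun i hi => ((hu i hi).gradient q hq).hasFDerivAt
  hessian q hq := HasFDerivAt.fun_sum fun i hi => (hu i hi).hessian q hq
  time q hq := HasDerivAt.fun_sum fun i hi => (hu i hi).time q hq

theorem comp {ψ ψ' ψ'' : ℝ → ℝ} (hu : HasParabolicDerivsOn O u G H u')
    (hψ : ∀ q ∈ O, HasDerivAt ψ (ψ' (u q)) (u q))
    (hψ' : ∀ q ∈ O, HasDerivAt ψ' (ψ'' (u q)) (u q)) :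
    HasParabolicDerivsOn O (fun q => ψ (u q)) (fun q => ψ' (u q) • G q)
      (fun q => ψ' (u q) • H q + ψ'' (u q) • rankOne ℝ (G q) (G q))
      (fun q => ψ' (u q) * u' q) where
  gradient q hq := by
    rw [hasGradientAt_iff_hasFDerivAt, map_smul]
    exact (hψ q hq).comp_hasFDerivAt q.1 (hu.gradient q hq).hasFDerivAt
  hessian q hq := by
    have h := ((hψ' q hq).comp_hasFDerivAt q.1 (hu.gradient q hq).hasFDerivAt).smul
      (hu.hessian q hq)
    refine h.congr_fderiv ?_
    ext y
    simp [rankOne_apply, smul_smul]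
  time q hq := (hψ q hq).comp q.2 (hu.time q hq)

theorem spatialDiffQuot (hu : HasParabolicDerivsOn O u G H u') (h : ℝ) (e : E) :
    HasParabolicDerivsOn {q | q ∈ O ∧ (q.1 + h • e, q.2) ∈ O} (spatialDiffQuot h e u)
      (spatialDiffQuot h e G) (spatialDiffQuot h e H) (spatialDiffQuot h e u') where
  gradient q hq := by
    rw [hasGradientAt_iff_hasFDerivAt, _root_.spatialDiffQuot, map_smul, map_sub]
    exact (((hasFDerivAt_comp_add_right (h • e)).2 (hu.gradient _ hq.2).hasFDerivAt).sub
      (hu.gradient q hq.1).hasFDerivAt).const_smul h⁻¹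
  hessian q hq := (((hasFDerivAt_comp_add_right (h • e)).2 (hu.hessian _ hq.2)).sub
    (hu.hessian q hq.1)).const_smul h⁻¹
  time q hq := ((hu.time _ hq.2).sub (hu.time q hq.1)).const_smul h⁻¹

theorem derivs_of_isLocalMaxOn (hu : HasParabolicDerivsOn O u G H u') (hO : IsOpen O)
    {q : E × ℝ} (hq : q ∈ O) (hmax : IsLocalMaxOn u {q' | q'.2 ≤ q.2} q) :
    G q = 0 ∧ traceCLM (H q) ≤ 0 ∧ 0 ≤ u' q := by
  have hspace : IsLocalMax (fun y => u (y, q.2)) q.1 := by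
    have : Tendsto (fun y => (y, q.2)) (𝓝 q.1) (𝓝[{q' | q'.2 ≤ q.2}] q) :=
      tendsto_nhdsWithin_iff.2 ⟨(by fun_prop : Continuous fun y => (y, q.2)).tendsto q.1,
        Eventually.of_forall fun _ => le_refl q.2⟩
    exact this.eventually hmax
  have htime : IsLocalMaxOn (fun s => u (q.1, s)) (Iic q.2) q.2 := by
    have : Tendsto (fun s => (q.1, s)) (𝓝[Iic q.2] q.2) (𝓝[{q' | q'.2 ≤ q.2}] q) :=
      tendsto_nhdsWithin_iff.2 ⟨((by fun_prop : Continuous fun s => (q.1, s)).tendsto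
        q.2).mono_left nhdsWithin_le_nhds, eventually_mem_nhdsWithin⟩
    exact this.eventually hmax
  refine ⟨?_, ?_, nonneg_of_hasDerivAt_of_isLocalMaxOn_Iic htime (hu.time q hq)⟩
  · simpa using hspace.hasFDerivAt_eq_zero (hu.gradient q hq).hasFDerivAt
  have hnear : ∀ᶠ y in 𝓝 q.1, HasGradientAt (fun y => u (y, q.2)) (G (y, q.2)) y := by
    have : ∀ᶠ y in 𝓝 q.1, (y, q.2) ∈ O :=
      (by fun_prop : Continuous fun y => (y, q.2)).continuousAt.eventually (hO.mem_nhds hq)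
    exact this.mono fun y hy => hu.gradient _ hy
  rw [traceCLM_eq_sum_inner (stdOrthonormalBasis ℝ E)]
  exact Finset.sum_nonpos fun i _ =>
    inner_apply_self_nonpos_of_isLocalMax hspace hnear (hu.hessian q hq) _

end HasParabolicDerivsOn

namespace IsC21On

variable {O : Set (E × ℝ)} {u u' w w' : E × ℝ → ℝ} {G Gw : E × ℝ → E} {H Hw : E × ℝ → E →L[ℝ] E}

theorem mono {O' : Set (E × ℝ)} (hu : IsC21On O u G H u') (h : O' ⊆ O) : IsC21On O' u G H u' :=
  ⟨hu.toHasParabolicDerivsOn.mono h, hu.continuousOn.mono h⟩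

theorem add (hu : IsC21On O u G H u') (hw : IsC21On O w Gw Hw w') :
    IsC21On O (u + w) (G + Gw) (H + Hw) (u' + w') :=
  ⟨hu.toHasParabolicDerivsOn.add hw.toHasParabolicDerivsOn, hu.continuousOn.add hw.continuousOn⟩

theorem add_const (hu : IsC21On O u G H u') (c : ℝ) : IsC21On O (fun q => u q + c) G H u' where
  gradient q hq :=
    hasGradientAt_iff_hasFDerivAt.2 ((hu.gradient q hq).hasFDerivAt.add_const c)
  hessian := hu.hessian
  time q hq := (hu.time q hq).add_const c
  continuousOn := (hu.continuousOn.fst.add continuousOn_const).prodMk hu.continuousOn.snd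

theorem comp {ψ ψ' ψ'' : ℝ → ℝ} (hu : IsC21On O u G H u')
    (hψ : ∀ q ∈ O, HasDerivAt ψ (ψ' (u q)) (u q))
    (hψ' : ∀ q ∈ O, HasDerivAt ψ' (ψ'' (u q)) (u q))
    (hψ'' : ContinuousOn (fun q => ψ'' (u q)) O) :
    IsC21On O (fun q => ψ (u q)) (fun q => ψ' (u q) • G q)
      (fun q => ψ' (u q) • H q + ψ'' (u q) • rankOne ℝ (G q) (G q))
      (fun q => ψ' (u q) * u' q) where
  toHasParabolicDerivsOn := hu.toHasParabolicDerivsOn.comp hψ hψ'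
  continuousOn := by
    have hcomp {χ χ' : ℝ → ℝ} (hχ : ∀ q ∈ O, HasDerivAt χ (χ' (u q)) (u q)) :
        ContinuousOn (fun q => χ (u q)) O := fun q hq =>
      (hχ q hq).continuousAt.comp_continuousWithinAt (hu.continuousOn.fst q hq)
    have hG := hu.continuousOn.snd.fst
    have hrank : ContinuousOn (fun q => rankOne ℝ (G q) (G q)) O :=
      ((rankOne ℝ).continuous.comp_continuousOn hG).clm_apply hG
    exact (hcomp hψ).prodMk (((hcomp hψ').smul hG).prodMk ((((hcomp hψ').smul
      hu.continuousOn.snd.snd.fst).add (hψ''.smul hrank)).prodMk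
        ((hcomp hψ').mul hu.continuousOn.snd.snd.snd)))

theorem const_mul_rpow (hu : IsC21On O u G H u') (hpos : ∀ q ∈ O, 0 < u q) (A r : ℝ) :
    IsC21On O (fun q => A * u q ^ r) (fun q => (A * (r * u q ^ (r - 1))) • G q)
      (fun q => (A * (r * u q ^ (r - 1))) • H q +
        (A * (r * ((r - 1) * u q ^ (r - 1 - 1)))) • rankOne ℝ (G q) (G q))
      (fun q => A * (r * u q ^ (r - 1)) * u' q) :=
  hu.comp (ψ := fun s => A * s ^ r) (ψ' := fun s => A * (r * s ^ (r - 1)))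
    (ψ'' := fun s => A * (r * ((r - 1) * s ^ (r - 1 - 1))))
    (fun q hq => (Real.hasDerivAt_rpow_const (Or.inl (hpos q hq).ne')).const_mul A)
    (fun q hq => ((Real.hasDerivAt_rpow_const (Or.inl (hpos q hq).ne')).const_mul r).const_mul A)
    (((hu.continuousOn.fst.rpow_const fun q hq => Or.inl (hpos q hq).ne').const_mul
      (r - 1)).const_mul r |>.const_mul A)

end IsC21On

theorem isC21On_of_hasDerivWithinAt {Ω : Set E} {t₀ t₁ : ℝ} {K : Set E} {v v' : E → ℝ → ℝ}
    {G : E → ℝ → E} {H : E → ℝ → E →L[ℝ] E} (hΩ : IsOpen Ω) (hΩK : Ω ⊆ K)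
    (hcont : ContinuousOn (fun q : E × ℝ => (v q.1 q.2, G q.1 q.2, H q.1 q.2, v' q.1 q.2))
      (K ×ˢ Icc t₀ t₁))
    (hG : ∀ t ∈ Icc t₀ t₁, ∀ x ∈ K, HasGradientWithinAt (fun y => v y t) (G x t) K x)
    (hH : ∀ t ∈ Icc t₀ t₁, ∀ x ∈ K, HasFDerivWithinAt (fun y => G y t) (H x t) K x)
    (hv' : ∀ x ∈ K, ∀ t ∈ Icc t₀ t₁, HasDerivWithinAt (fun s => v x s) (v' x t) (Icc t₀ t₁) t) :
    IsC21On (Ω ×ˢ Ioo t₀ t₁) (fun q => v q.1 q.2) (fun q => G q.1 q.2) (fun q => H q.1 q.2)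
      (fun q => v' q.1 q.2) where
  gradient q hq := hasGradientAt_iff_hasFDerivAt.2 <|
    (hG q.2 (Ioo_subset_Icc_self hq.2) q.1 (hΩK hq.1)).hasFDerivWithinAt.hasFDerivAt
      (mem_of_superset (hΩ.mem_nhds hq.1) hΩK)
  hessian q hq := (hH q.2 (Ioo_subset_Icc_self hq.2) q.1 (hΩK hq.1)).hasFDerivAt
    (mem_of_superset (hΩ.mem_nhds hq.1) hΩK)
  time q hq := (hv' q.1 (hΩK hq.1) q.2 (Ioo_subset_Icc_self hq.2)).hasDerivAt
    (Icc_mem_nhds hq.2.1 hq.2.2)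
  continuousOn := hcont.mono (prod_mono hΩK Ioo_subset_Icc_self)

/-! ### The Bernstein inequality -/

theorem bernstein_of_isLocalMaxOn_spatialDiffQuot {ι : Type*} [Fintype ι] (e : ι → E)
    {O : Set (E × ℝ)} {v v' Q φ φ' : E × ℝ → ℝ} {G Gφ : E × ℝ → E} {H Hφ : E × ℝ → E →L[ℝ] E}
    (hO : IsOpen O) (hv : HasParabolicDerivsOn O v G H v')
    (heq : ∀ q ∈ O, v' q - traceCLM (H q) = Q q) (hφ : HasParabolicDerivsOn O φ Gφ Hφ φ')
    {h : ℝ} {q : E × ℝ} (hq : q ∈ O) (hqh : ∀ i, (q.1 + h • e i, q.2) ∈ O)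
    (hmax : IsLocalMaxOn (fun q => ∑ i, spatialDiffQuot h (e i) v q ^ 2 - φ q)
      {q' | q'.2 ≤ q.2} q) :
    Gφ q = ∑ i, (2 * spatialDiffQuot h (e i) v q) • spatialDiffQuot h (e i) G q ∧
      φ' q - traceCLM (Hφ q) ≤ ∑ i, (2 * spatialDiffQuot h (e i) v q * spatialDiffQuot h (e i) Q q
        - 2 * ‖spatialDiffQuot h (e i) G q‖ ^ 2) := by
  let Oh : Set (E × ℝ) := O ∩ ⋂ i, (fun q => (q.1 + h • e i, q.2)) ⁻¹' O
  have hOh : IsOpen Oh := hO.inter (isOpen_iInter_of_finite fun i => hO.preimage (by fun_prop))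
  have hsq := HasParabolicDerivsOn.sum (s := Finset.univ) fun i _ =>
    ((hv.spatialDiffQuot h (e i)).mono (O' := Oh) fun q hq => ⟨hq.1, mem_iInter.1 hq.2 i⟩).comp
      (ψ := fun s => s ^ 2) (ψ' := fun s => 2 * s) (ψ'' := fun _ => 2)
      (fun q _ => by simpa using hasDerivAt_pow 2 _)
      (fun q _ => by simpa using (hasDerivAt_id _).const_mul (2 : ℝ))
  obtain ⟨hgrad, htrace, htime⟩ := (hsq.sub (hφ.mono fun q hq => hq.1)).derivs_of_isLocalMaxOn
    hOh ⟨hq, mem_iInter.2 hqh⟩ hmax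
  refine ⟨(sub_eq_zero.1 hgrad).symm, ?_⟩
  have hQ (i : ι) : spatialDiffQuot h (e i) v' q - traceCLM (spatialDiffQuot h (e i) H q) =
      spatialDiffQuot h (e i) Q q := by
    simp only [spatialDiffQuot, ← heq _ hq, ← heq _ (hqh i), map_smul, map_sub, smul_eq_mul]
    ring
  simp only [Pi.sub_apply, map_sub, map_sum, map_add, map_smul, traceCLM_rankOne,
    real_inner_self_eq_norm_sq, smul_eq_mul] at htrace htime
  simp only [Finset.sum_add_distrib] at htrace
  simp only [← hQ, mul_sub, Finset.sum_sub_distrib]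
  linarith

namespace IsC21On

variable {O : Set (E × ℝ)} {v v' : E × ℝ → ℝ} {G : E × ℝ → E} {H : E × ℝ → E →L[ℝ] E}

theorem tendsto_spatialDiffQuot (hv : IsC21On O v G H v') (hO : IsOpen O) {q : E × ℝ} (hq : q ∈ O)
    (e : E) : Tendsto (fun a : ℝ × (E × ℝ) => spatialDiffQuot a.1 e v a.2) (𝓝[≠] 0 ×ˢ 𝓝 q)
      (𝓝 ⟪G q, e⟫) :=
  _root_.tendsto_spatialDiffQuot hO (fun q hq => (hv.gradient q hq).hasFDerivAt)
    ((toDual ℝ E).continuous.comp_continuousOn hv.continuousOn.snd.fst) hq e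

theorem tendsto_spatialDiffQuot_gradient (hv : IsC21On O v G H v') (hO : IsOpen O) {q : E × ℝ}
    (hq : q ∈ O) (e : E) : Tendsto (fun a : ℝ × (E × ℝ) => spatialDiffQuot a.1 e G a.2)
      (𝓝[≠] 0 ×ˢ 𝓝 q) (𝓝 (H q e)) :=
  _root_.tendsto_spatialDiffQuot hO hv.hessian hv.continuousOn.snd.snd.fst hq e

theorem tendsto_sum_sq_spatialDiffQuot {ι : Type*} [Fintype ι] (b : OrthonormalBasis ι ℝ E)
    (hv : IsC21On O v G H v') (hO : IsOpen O) {q : E × ℝ} (hq : q ∈ O) :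
    Tendsto (fun a : ℝ × (E × ℝ) => ∑ i, spatialDiffQuot a.1 (b i) v a.2 ^ 2) (𝓝[≠] 0 ×ˢ 𝓝 q)
      (𝓝 (‖G q‖ ^ 2)) := by
  rw [← b.sum_sq_inner_left (G q)]
  exact tendsto_finsetSum _ fun i _ => (hv.tendsto_spatialDiffQuot hO hq (b i)).pow 2

theorem exists_frequently_isLocalMaxOn_spatialDiffQuot {ι : Type*} [Fintype ι]
    (b : OrthonormalBasis ι ℝ E) (hv : IsC21On O v G H v') (hO : IsOpen O) {φ : E × ℝ → ℝ}
    (hφ : ContinuousOn φ O) {T : ℝ} (hK : IsCompact {q | q ∈ O ∧ q.2 ≤ T ∧ φ q ≤ ‖G q‖ ^ 2})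
    {q₀ : E × ℝ} (hq₀ : q₀ ∈ O) (hT : q₀.2 ≤ T) (hlt : φ q₀ < ‖G q₀‖ ^ 2) :
    ∃ z ∈ O, φ z < ‖G z‖ ^ 2 ∧ ∃ᶠ a in 𝓝[≠] (0 : ℝ) ×ˢ 𝓝 z, a.2 ∈ O ∧
      (∀ i, (a.2.1 + a.1 • b i, a.2.2) ∈ O) ∧
      IsLocalMaxOn (fun q => ∑ i, spatialDiffQuot a.1 (b i) v q ^ 2 - φ q)
        {q' | q'.2 ≤ a.2.2} a.2 := by
  set K := {q | q ∈ O ∧ q.2 ≤ T ∧ φ q ≤ ‖G q‖ ^ 2}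
  have hKO : K ⊆ O := fun q hq => hq.1
  have hshift : ∀ᶠ h in 𝓝[≠] (0 : ℝ), ∀ q ∈ K, ∀ i, (q.1 + h • b i, q.2) ∈ O := by
    have := eventually_all.2 fun i => eventually_forall_add_smul_mem_of_isCompact hK hO hKO (b i)
    filter_upwards [mem_nhdsWithin_of_mem_nhds this] with h hh q hq i using hh i q hq
  have hcont : ∀ᶠ h in 𝓝[≠] (0 : ℝ),
      ContinuousOn (fun q => ∑ i, spatialDiffQuot h (b i) v q ^ 2 - φ q) K := by
    filter_upwards [hshift] with h hh
    refine (continuousOn_finsetSum _ fun i _ => ContinuousOn.pow ?_ 2).sub (hφ.mono hKO)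
    exact ((hv.continuousOn.fst.comp (by fun_prop) fun q hq => hh q hq i).sub
      (hv.continuousOn.fst.mono hKO)).const_smul h⁻¹
  obtain ⟨z, hzK, hzmax, hfreq⟩ := exists_isMaxOn_and_frequently_isMaxOn hK
    ⟨q₀, hq₀, hT, hlt.le⟩ hcont fun z hz =>
      (hv.tendsto_sum_sq_spatialDiffQuot b hO (hKO hz)).sub
        ((hφ.continuousAt (hO.mem_nhds (hKO hz))).tendsto.comp tendsto_snd)
  have hz : φ z < ‖G z‖ ^ 2 := by
    simpa using (sub_pos.2 hlt).trans_le (hzmax ⟨hq₀, hT, hlt.le⟩)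
  have hnear : ∀ᶠ q in 𝓝 z, q ∈ O ∧ φ q < ‖G q‖ ^ 2 :=
    (hO.eventually_mem (hKO hzK)).and ((hφ.continuousAt (hO.mem_nhds (hKO hzK))).eventually_lt
      ((hv.continuousOn.snd.fst.continuousAt (hO.mem_nhds (hKO hzK))).norm.pow 2) hz)
  refine ⟨z, hKO hzK, hz, ?_⟩
  refine (hfreq.and_eventually (hshift.prod_mk hnear.eventually_nhds)).mono ?_
  rintro ⟨h, q⟩ ⟨⟨hqK, hqmax⟩, hh, hq⟩
  refine ⟨hKO hqK, hh q hqK, ?_⟩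
  filter_upwards [mem_nhdsWithin_of_mem_nhds hq, self_mem_nhdsWithin] with q' hq' hle
  exact hqmax ⟨hq'.1, (show q'.2 ≤ q.2 from hle).trans hqK.2.1, hq'.2.le⟩

theorem exists_bernstein_of_isCompact {ι : Type*} [Fintype ι] (b : OrthonormalBasis ι ℝ E)
    (hv : IsC21On O v G H v') (hO : IsOpen O) {Q φ φ' : E × ℝ → ℝ} {DQ : E × ℝ → E →L[ℝ] ℝ}
    {Gφ : E × ℝ → E} {Hφ : E × ℝ → E →L[ℝ] E} (heq : ∀ q ∈ O, v' q - traceCLM (H q) = Q q)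
    (hQ : ∀ q ∈ O, HasFDerivAt (fun y => Q (y, q.2)) (DQ q) q.1) (hDQ : ContinuousOn DQ O)
    (hφ : IsC21On O φ Gφ Hφ φ') {T : ℝ}
    (hK : IsCompact {q | q ∈ O ∧ q.2 ≤ T ∧ φ q ≤ ‖G q‖ ^ 2}) {q₀ : E × ℝ} (hq₀ : q₀ ∈ O)
    (hT : q₀.2 ≤ T) (hlt : φ q₀ < ‖G q₀‖ ^ 2) :
    ∃ q ∈ O, φ q < ‖G q‖ ^ 2 ∧ Gφ q = (2 : ℝ) • H q (G q) ∧
      φ' q - traceCLM (Hφ q) ≤ 2 * DQ q (G q) - 2 * ∑ i, ‖H q (b i)‖ ^ 2 := by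
  obtain ⟨z, hz, hlt, hfreq⟩ :=
    hv.exists_frequently_isLocalMaxOn_spatialDiffQuot b hO hφ.continuousOn.fst hK hq₀ hT hlt
  have hmax := hfreq.mono fun a ha => bernstein_of_isLocalMaxOn_spatialDiffQuot b hO
    hv.toHasParabolicDerivsOn heq hφ.toHasParabolicDerivsOn ha.1 ha.2.1 ha.2.2
  have hDv i := hv.tendsto_spatialDiffQuot hO hz (b i)
  have hDG i := hv.tendsto_spatialDiffQuot_gradient hO hz (b i)
  have hDQ' i := _root_.tendsto_spatialDiffQuot hO hQ hDQ hz (b i)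
  have hφz : Tendsto (fun a : ℝ × (E × ℝ) => (φ a.2, Gφ a.2, Hφ a.2, φ' a.2)) (𝓝[≠] 0 ×ˢ 𝓝 z)
      (𝓝 (φ z, Gφ z, Hφ z, φ' z)) :=
    (hφ.continuousOn.continuousAt (hO.mem_nhds hz)).tendsto.comp tendsto_snd
  have hgrad : Gφ z = ∑ i, (2 * ⟪G z, b i⟫) • H z (b i) :=
    tendsto_nhds_unique_of_frequently_eq hφz.snd_nhds.fst_nhds
      (tendsto_finsetSum _ fun i _ => ((hDv i).const_mul 2).smul (hDG i))
      (hmax.mono fun a ha => ha.1)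
  have hineq : φ' z - traceCLM (Hφ z) ≤
      ∑ i, (2 * ⟪G z, b i⟫ * DQ z (b i) - 2 * ‖H z (b i)‖ ^ 2) :=
    le_of_tendsto_of_tendsto_of_frequently
      (hφz.snd_nhds.snd_nhds.snd_nhds.sub
        ((traceCLM.continuous.tendsto _).comp hφz.snd_nhds.snd_nhds.fst_nhds))
      (tendsto_finsetSum _ fun i _ => (((hDv i).const_mul 2).mul (hDQ' i)).sub
        (((hDG i).norm.pow 2).const_mul 2))
      (hmax.mono fun a ha => ha.2)
  have hG : G z = ∑ i, ⟪G z, b i⟫ • b i := by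
    simpa only [real_inner_comm] using (b.sum_repr' (G z)).symm
  refine ⟨z, hz, hlt, ?_, hineq.trans_eq ?_⟩
  · conv_rhs => rw [hG]
    simp only [hgrad, map_sum, map_smul, Finset.smul_sum, smul_smul]
  · conv_rhs => rw [hG]
    simp only [map_sum, map_smul, smul_eq_mul, Finset.mul_sum, Finset.sum_sub_distrib, mul_assoc]

end IsC21On

theorem sq_traceCLM_le {ι : Type*} [Fintype ι] (b : OrthonormalBasis ι ℝ E) (T : E →L[ℝ] E) :
    traceCLM T ^ 2 ≤ Module.finrank ℝ E * ∑ i, ‖T (b i)‖ ^ 2 := by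
  rw [traceCLM_eq_sum_inner b, Module.finrank_eq_card_basis b.toBasis, ← Finset.card_univ]
  refine sq_sum_le_card_mul_sum_sq.trans ?_
  refine mul_le_mul_of_nonneg_left (Finset.sum_le_sum fun i _ => ?_) (Nat.cast_nonneg _)
  rw [sq_le_sq, abs_norm]
  simpa using abs_real_inner_le_norm (b i) (T (b i))

theorem IsC21On.exists_bernstein_of_hamiltonJacobi {O : Set (E × ℝ)} {v v' φ φ' : E × ℝ → ℝ}
    {G Gφ : E × ℝ → E} {H Hφ : E × ℝ → E →L[ℝ] E} {p : ℝ} (hp : 1 < p) (hv : IsC21On O v G H v')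
    (hO : IsOpen O) (heq : ∀ q ∈ O, v' q - traceCLM (H q) = ‖G q‖ ^ p)
    (hφ : IsC21On O φ Gφ Hφ φ') {T : ℝ}
    (hK : IsCompact {q | q ∈ O ∧ q.2 ≤ T ∧ φ q ≤ ‖G q‖ ^ 2}) {q₀ : E × ℝ} (hq₀ : q₀ ∈ O)
    (hT : q₀.2 ≤ T) (hlt : φ q₀ < ‖G q₀‖ ^ 2) :
    ∃ q ∈ O, φ q < ‖G q‖ ^ 2 ∧ 2 * traceCLM (H q) ^ 2 ≤
      Module.finrank ℝ E * (p * ‖G q‖ ^ (p - 2) * ⟪G q, Gφ q⟫ + traceCLM (Hφ q) - φ' q) := by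
  let DQ (q : E × ℝ) : E →L[ℝ] ℝ := ((p * ‖G q‖ ^ (p - 2)) • innerSL ℝ (G q)) ∘L H q
  have hQ : ∀ q ∈ O, HasFDerivAt (fun y => ‖G (y, q.2)‖ ^ p) (DQ q) q.1 := fun q hq =>
    HasFDerivAt.comp (g := fun x : E => ‖x‖ ^ p) q.1 (hasFDerivAt_norm_rpow (G q) hp)
      (hv.hessian q hq)
  have hDQ : ContinuousOn DQ O := ((continuous_mul_norm_rpow_smul_innerSL hp).comp_continuousOn
    hv.continuousOn.snd.fst).clm_comp hv.continuousOn.snd.snd.fst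
  obtain ⟨q, hq, hlt, hgrad, hineq⟩ :=
    hv.exists_bernstein_of_isCompact (stdOrthonormalBasis ℝ E) hO heq hQ hDQ hφ hK hq₀ hT hlt
  refine ⟨q, hq, hlt, ?_⟩
  have htrace := sq_traceCLM_le (stdOrthonormalBasis ℝ E) (H q)
  have hsum : 2 * ∑ i, ‖H q (stdOrthonormalBasis ℝ E i)‖ ^ 2 ≤
      p * ‖G q‖ ^ (p - 2) * ⟪G q, Gφ q⟫ + traceCLM (Hφ q) - φ' q := by
    rw [hgrad, real_inner_smul_right]
    have hDQq : DQ q (G q) = p * ‖G q‖ ^ (p - 2) * ⟪G q, H q (G q)⟫ := rfl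
    linarith
  calc 2 * traceCLM (H q) ^ 2
      ≤ Module.finrank ℝ E * (2 * ∑ i, ‖H q (stdOrthonormalBasis ℝ E i)‖ ^ 2) := by linarith
    _ ≤ _ := by gcongr

end Parabolic

/-! ### The barrier -/

section Barrier

variable {E : Type*} [SeminormedAddCommGroup E]

/-- The function `(R² - |x - x₀|²) / R`, a smooth substitute for the distance from `x` to the
boundary of the ball of radius `R` about `x₀`. -/
def ballDepth (x₀ : E) (R : ℝ) (x : E) : ℝ := (R ^ 2 - ‖x - x₀‖ ^ 2) / R

theorem ballDepth_pos_iff {x₀ x : E} {R : ℝ} (hR : 0 < R) :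
    0 < ballDepth x₀ R x ↔ x ∈ ball x₀ R := by
  rw [ballDepth, div_pos_iff_of_pos_right hR, sub_pos, mem_ball_iff_norm,
    sq_lt_sq₀ (norm_nonneg _) hR.le]

theorem ballDepth_le {R : ℝ} (hR : 0 < R) (x₀ x : E) : ballDepth x₀ R x ≤ R := by
  rw [ballDepth, div_le_iff₀ hR]
  nlinarith [sq_nonneg ‖x - x₀‖]

theorem half_le_ballDepth {x₀ x : E} {R : ℝ} (hR : 0 < R) (hx : x ∈ ball x₀ (R / 2)) :
    R / 2 ≤ ballDepth x₀ R x := by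
  rw [mem_ball_iff_norm] at hx
  rw [ballDepth, le_div_iff₀ hR]
  nlinarith [norm_nonneg (x - x₀)]

theorem ballDepth_rpow_neg_le {x₀ x : E} {R a : ℝ} (hR : 0 < R) (ha : 0 ≤ a)
    (hx : x ∈ ball x₀ (R / 2)) : ballDepth x₀ R x ^ (-a) ≤ 2 ^ a * R ^ (-a) := by
  calc ballDepth x₀ R x ^ (-a) ≤ (R / 2) ^ (-a) :=
        Real.rpow_le_rpow_of_nonpos (half_pos hR) (half_le_ballDepth hR hx) (neg_nonpos.2 ha)
    _ = 2 ^ a * R ^ (-a) := by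
        rw [Real.div_rpow hR.le two_pos.le, Real.rpow_neg two_pos.le, div_inv_eq_mul, mul_comm]

theorem norm_ballDepth_gradient_le [NormedSpace ℝ E] {x₀ x : E} {R : ℝ} (hR : 0 < R)
    (hx : 0 < ballDepth x₀ R x) :
    ‖(-(2 / R)) • (x - x₀)‖ ≤ 2 := by
  rw [ballDepth_pos_iff hR, mem_ball_iff_norm] at hx
  rw [norm_smul, norm_neg, Real.norm_of_nonneg (by positivity), div_mul_eq_mul_div,
    div_le_iff₀ hR]
  gcongr

/-- The barrier `A ρ^(-2/(p-1)) + A (t - t₀)^(-1/(p-1)) + c` of the Bernstein argument, where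
`ρ = ballDepth x₀ R` vanishes on the lateral boundary; the exponents are those for which it has the
scaling of `|∇v|²` when `v_t - Δv = |∇v|^p`. Where `ρ ≤ 0` or `t ≤ t₀` its values are junk, not
`+∞`. -/
def bernsteinBarrier (p A c : ℝ) (x₀ : E) (R t₀ : ℝ) (q : E × ℝ) : ℝ :=
  A * ballDepth x₀ R q.1 ^ (-(2 / (p - 1))) + (A * (q.2 - t₀) ^ (-(1 / (p - 1))) + c)

theorem lt_bernsteinBarrier {p A R t₀ : ℝ} {x₀ : E} {q : E × ℝ} (hA : 0 < A) (c : ℝ)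
    (hρ : 0 < ballDepth x₀ R q.1) (ht : t₀ < q.2) : c < bernsteinBarrier p A c x₀ R t₀ q := by
  have : 0 < q.2 - t₀ := sub_pos.2 ht
  rw [bernsteinBarrier, ← add_assoc]
  exact lt_add_of_pos_left c (by positivity)

theorem bernsteinBarrier_le {p A R M N t₀ : ℝ} {x₀ : E} {q : E × ℝ} (hp : 1 < p) (hA : 0 ≤ A)
    (hR : 0 < R) (hM : 0 ≤ M) (hN : 0 ≤ N) (hx : q.1 ∈ ball x₀ (R / 2)) (ht : t₀ < q.2) :
    bernsteinBarrier p A (N ^ 2 + (2 * M) ^ (2 / p)) x₀ R t₀ q ≤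
      (1 + 2 ^ (2 / p) + A * 2 ^ (2 / (p - 1)) + A) *
        (N + M ^ (1 / p) + R ^ (-(1 / (p - 1))) + (q.2 - t₀) ^ (-(1 / (2 * (p - 1))))) ^ 2 := by
  have hp1 : 0 < p - 1 := sub_pos.2 hp
  have hτ := sub_pos.2 ht
  have hspace := ballDepth_rpow_neg_le hR (div_pos two_pos hp1).le hx
  have hradius : R ^ (-(2 / (p - 1))) = (R ^ (-(1 / (p - 1)))) ^ 2 := by
    rw [← Real.rpow_mul_natCast hR.le]
    congr 1
    push_cast
    ring
  have htime : (q.2 - t₀) ^ (-(1 / (p - 1))) = ((q.2 - t₀) ^ (-(1 / (2 * (p - 1))))) ^ 2 := by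
    rw [← Real.rpow_mul_natCast hτ.le]
    congr 1
    push_cast
    field_simp
  have hsource : (2 * M) ^ (2 / p) = 2 ^ (2 / p) * (M ^ (1 / p)) ^ 2 := by
    rw [Real.mul_rpow two_pos.le hM, ← Real.rpow_mul_natCast hM]
    congr 2
    push_cast
    ring
  have hm : 0 ≤ M ^ (1 / p) := by positivity
  have hr : 0 ≤ R ^ (-(1 / (p - 1))) := by positivity
  have hs : 0 ≤ (q.2 - t₀) ^ (-(1 / (2 * (p - 1)))) := by positivity
  rw [hradius] at hspace
  rw [bernsteinBarrier, htime, hsource]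
  generalize M ^ (1 / p) = m, R ^ (-(1 / (p - 1))) = r,
    (q.2 - t₀) ^ (-(1 / (2 * (p - 1)))) = s at *
  calc A * ballDepth x₀ R q.1 ^ (-(2 / (p - 1))) + (A * s ^ 2 + (N ^ 2 + 2 ^ (2 / p) * m ^ 2))
      ≤ A * (2 ^ (2 / (p - 1)) * (N + m + r + s) ^ 2) + (A * (N + m + r + s) ^ 2 +
        ((N + m + r + s) ^ 2 + 2 ^ (2 / p) * (N + m + r + s) ^ 2)) := by
        gcongr
        · exact hspace.trans (by gcongr; linarith)
        all_goals linarith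
    _ = _ := by ring

end Barrier

section Compactness

variable {E V : Type*} [NormedAddCommGroup E] [SeminormedAddCommGroup V]

theorem exists_pos_le_of_mul_rpow_neg_le {A a : ℝ} (hA : 0 < A) (ha : 0 < a) (B : ℝ) :
    ∃ δ > 0, ∀ s > 0, A * s ^ (-a) ≤ B → δ ≤ s := by
  have h : ∀ᶠ s in 𝓝[>] (0 : ℝ), B < A * s ^ (-a) :=
    ((tendsto_rpow_neg_nhdsGT_zero (neg_lt_zero.2 ha)).const_mul_atTop hA).eventually_gt_atTop B
  obtain ⟨δ, hδ, hsub⟩ := mem_nhdsGT_iff_exists_Ioo_subset.1 h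
  exact ⟨δ, hδ, fun s hs hB => not_lt.1 fun hsδ => (hsub ⟨hs, hsδ⟩).not_ge hB⟩

theorem isCompact_setOf_bernsteinBarrier_le {K : Set (E × ℝ)} {g : E × ℝ → ℝ} {p A R : ℝ}
    (hp : 1 < p) (hA : 0 < A) (c : ℝ) (x₀ : E) (t₀ : ℝ) (hK : IsCompact K)
    (hg : ContinuousOn g K) :
    IsCompact {q ∈ K | 0 < ballDepth x₀ R q.1 ∧ t₀ < q.2 ∧
      bernsteinBarrier p A c x₀ R t₀ q ≤ g q} := by
  have hp1 : 0 < p - 1 := sub_pos.2 hp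
  obtain ⟨B, hB⟩ := hK.bddAbove_image hg
  obtain ⟨δ, hδ, hρ⟩ := exists_pos_le_of_mul_rpow_neg_le hA (div_pos two_pos hp1) (B - c)
  obtain ⟨η, hη, hτ⟩ := exists_pos_le_of_mul_rpow_neg_le hA (div_pos one_pos hp1) (B - c)
  have hdepth : Continuous fun q : E × ℝ => ballDepth x₀ R q.1 := by unfold ballDepth; fun_prop
  have hK' : IsCompact (K ∩ {q | δ ≤ ballDepth x₀ R q.1 ∧ η ≤ q.2 - t₀}) :=
    hK.inter_right ((isClosed_le continuous_const hdepth).inter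
      (isClosed_le continuous_const (continuous_snd.sub continuous_const)))
  have hφ : ContinuousOn (bernsteinBarrier p A c x₀ R t₀)
      (K ∩ {q | δ ≤ ballDepth x₀ R q.1 ∧ η ≤ q.2 - t₀}) := by
    unfold bernsteinBarrier
    refine (continuousOn_const.mul (hdepth.continuousOn.rpow_const fun q hq => ?_)).add
      ((continuousOn_const.mul (ContinuousOn.rpow_const (by fun_prop) fun q hq => ?_)).add
        continuousOn_const)
    · exact Or.inl (hδ.trans_le hq.2.1).ne'
    · exact Or.inl (hη.trans_le hq.2.2).ne'
  convert hK'.of_isClosed_subset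
    (hK'.isClosed.isClosed_le hφ (hg.mono inter_subset_left)) (sep_subset _ _) using 1
  ext q
  constructor
  · rintro ⟨hqK, hq, ht, hle⟩
    have hqB := hle.trans (hB (mem_image_of_mem g hqK))
    have h₁ := mul_nonneg hA.le (Real.rpow_nonneg hq.le (-(2 / (p - 1))))
    have h₂ := mul_nonneg hA.le (Real.rpow_nonneg (sub_pos.2 ht).le (-(1 / (p - 1))))
    rw [bernsteinBarrier] at hqB
    exact ⟨⟨hqK, hρ _ hq (by linarith), hτ _ (sub_pos.2 ht) (by linarith)⟩, hle⟩
  · rintro ⟨⟨hqK, hq, ht⟩, hle⟩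
    exact ⟨hqK, hδ.trans_le hq, sub_pos.1 (hη.trans_le ht), hle⟩

theorem isCompact_setOf_bernsteinBarrier_le_sq_norm [ProperSpace E] {ω : Set E} {G : E × ℝ → V}
    {p A c R N t₀ t₁ T : ℝ} {x₀ : E} (hp : 1 < p) (hA : 0 < A) (hR : 0 < R) (hω : IsOpen ω)
    (hG : ContinuousOn G ((closure (ball x₀ R) ∩ closure ω) ×ˢ Icc t₀ t₁)) (hT : T < t₁)
    (hGN : ∀ q ∈ (ball x₀ R ∩ frontier ω) ×ˢ Ioo t₀ t₁, ‖G q‖ ≤ N) (hNc : N ^ 2 ≤ c) :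
    IsCompact {q | q ∈ (ball x₀ R ∩ ω) ×ˢ Ioo t₀ t₁ ∧ q.2 ≤ T ∧
      bernsteinBarrier p A c x₀ R t₀ q ≤ ‖G q‖ ^ 2} := by
  have hK : IsCompact ((closure (ball x₀ R) ∩ closure ω) ×ˢ Icc t₀ T) :=
    (isBounded_ball.isCompact_closure.inter_right isClosed_closure).prod isCompact_Icc
  convert isCompact_setOf_bernsteinBarrier_le (R := R) hp hA c x₀ t₀ hK
    (g := fun q => ‖G q‖ ^ 2)
    ((hG.mono (prod_mono_right (Icc_subset_Icc_right hT.le))).norm.pow 2) using 1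
  ext q
  simp only [ballDepth_pos_iff hR, mem_ofPred_eq, mem_prod, mem_inter_iff, mem_Ioo, mem_Icc]
  constructor
  · rintro ⟨⟨⟨hx, hxω⟩, ht, -⟩, htT, hle⟩
    exact ⟨⟨⟨subset_closure hx, subset_closure hxω⟩, ht.le, htT⟩, hx, ht, hle⟩
  · rintro ⟨⟨⟨-, hxω⟩, -, htT⟩, hx, ht, hle⟩
    refine ⟨⟨⟨hx, ?_⟩, ht, htT.trans_lt hT⟩, htT, hle⟩
    by_contra hxω'
    have hN := hGN q ⟨⟨hx, hxω, by rwa [hω.interior_eq]⟩, ht, htT.trans_lt hT⟩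
    have hc := lt_bernsteinBarrier hA c ((ballDepth_pos_iff hR).2 hx) ht (p := p)
    have hN2 : ‖G q‖ ^ 2 ≤ N ^ 2 := by gcongr
    linarith

end Compactness

section BarrierDerivatives

variable {E : Type*} [NormedAddCommGroup E] [InnerProductSpace ℝ E] [FiniteDimensional ℝ E]

theorem isC21On_ballDepth (x₀ : E) (R : ℝ) :
    IsC21On univ (fun q : E × ℝ => ballDepth x₀ R q.1) (fun q => (-(2 / R)) • (q.1 - x₀))
      (fun _ => (-(2 / R)) • ContinuousLinearMap.id ℝ E) (fun _ => 0) where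
  gradient q _ := by
    rw [hasGradientAt_iff_hasFDerivAt]
    have h := (((hasStrictFDerivAt_norm_sq (q.1 - x₀)).hasFDerivAt.comp q.1
      ((hasFDerivAt_id q.1).sub_const x₀)).const_sub (R ^ 2)).mul_const R⁻¹
    refine h.congr_fderiv ?_
    ext y
    simp only [map_sub, ContinuousLinearMap.comp_id, smul_neg, neg_apply, smul_apply, sub_apply,
      coe_innerSL_apply, nsmul_eq_mul, Nat.cast_ofNat, smul_eq_mul, neg_smul, map_neg, map_smul,
      toDual_apply_apply, neg_inj]
    ring
  hessian q _ := ((hasFDerivAt_id q.1).sub_const x₀).const_smul (-(2 / R))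
  time q _ := hasDerivAt_const q.2 (ballDepth x₀ R q.1)
  continuousOn := by
    unfold ballDepth
    fun_prop

theorem isC21On_time (t₀ : ℝ) :
    IsC21On univ (fun q : E × ℝ => q.2 - t₀) (fun _ => 0) (fun _ => 0) (fun _ => 1) where
  gradient q _ := hasGradientAt_const q.1 (q.2 - t₀)
  hessian q _ := hasFDerivAt_const _ _
  time q _ := (hasDerivAt_id q.2).sub_const t₀
  continuousOn := by fun_prop

theorem exists_isC21On_const_mul_ballDepth_rpow {R A a : ℝ} (hR : 0 < R) (hA : 0 ≤ A)
    (ha : 0 ≤ a) (x₀ : E) :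
    ∃ G H, IsC21On {q : E × ℝ | 0 < ballDepth x₀ R q.1} (fun q => A * ballDepth x₀ R q.1 ^ (-a))
      G H (fun _ => 0) ∧ ∀ q : E × ℝ, 0 < ballDepth x₀ R q.1 →
        ‖G q‖ ≤ 2 * a * (A * ballDepth x₀ R q.1 ^ (-a - 1)) ∧
        traceCLM (H q) ≤ (4 * a * (a + 1) + 2 * a * Module.finrank ℝ E) *
          (A * ballDepth x₀ R q.1 ^ (-a - 1 - 1)) := by
  have h := ((isC21On_ballDepth x₀ R).mono (subset_univ
    {q : E × ℝ | 0 < ballDepth x₀ R q.1})).const_mul_rpow (fun q hq => hq) A (-a)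
  simp only [mul_zero] at h
  refine ⟨_, _, h, fun q hq => ?_⟩
  have hgrad := norm_ballDepth_gradient_le hR hq
  set ρ := ballDepth x₀ R q.1
  set g := (-(2 / R)) • (q.1 - x₀)
  constructor
  · rw [norm_smul, Real.norm_eq_abs, neg_mul, mul_neg, abs_neg, abs_of_nonneg (by positivity)]
    calc A * (a * ρ ^ (-a - 1)) * ‖g‖ ≤ A * (a * ρ ^ (-a - 1)) * 2 := by gcongr
      _ = 2 * a * (A * ρ ^ (-a - 1)) := by ring
  · have hid : traceCLM (ContinuousLinearMap.id ℝ E) = Module.finrank ℝ E :=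
      LinearMap.trace_id ℝ E
    have hdiv : ρ ^ (-a - 1) * R⁻¹ ≤ ρ ^ (-a - 1 - 1) := by
      rw [Real.rpow_sub_one hq.ne' (-a - 1), div_eq_mul_inv]
      gcongr
      exact ballDepth_le hR x₀ q.1
    have hsq : ‖g‖ ^ 2 ≤ 4 := by nlinarith [norm_nonneg g]
    simp only [map_add, map_smul, traceCLM_rankOne, real_inner_self_eq_norm_sq, hid, smul_eq_mul]
    calc A * (-a * ρ ^ (-a - 1)) * (-(2 / R) * Module.finrank ℝ E) +
          A * (-a * ((-a - 1) * ρ ^ (-a - 1 - 1))) * ‖g‖ ^ 2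
        = 2 * a * Module.finrank ℝ E * A * (ρ ^ (-a - 1) * R⁻¹) +
          A * a * (a + 1) * ρ ^ (-a - 1 - 1) * ‖g‖ ^ 2 := by ring
      _ ≤ 2 * a * Module.finrank ℝ E * A * ρ ^ (-a - 1 - 1) +
          A * a * (a + 1) * ρ ^ (-a - 1 - 1) * 4 := by gcongr
      _ = _ := by ring

theorem exists_isC21On_bernsteinBarrier {p A R : ℝ} (hp : 1 < p) (hA : 0 ≤ A) (hR : 0 < R)
    (c : ℝ) (x₀ : E) (t₀ : ℝ) :
    ∃ G H u', IsC21On {q : E × ℝ | 0 < ballDepth x₀ R q.1 ∧ t₀ < q.2}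
      (bernsteinBarrier p A c x₀ R t₀) G H u' ∧
      ∀ q : E × ℝ, 0 < ballDepth x₀ R q.1 → t₀ < q.2 →
        ‖G q‖ ≤ 2 * (2 / (p - 1)) *
          (A * (ballDepth x₀ R q.1 ^ (-(2 / (p - 1)))) ^ ((p + 1) / 2)) ∧
        traceCLM (H q) ≤ (4 * (2 / (p - 1)) * (2 / (p - 1) + 1) +
          2 * (2 / (p - 1)) * Module.finrank ℝ E) *
            (A * (ballDepth x₀ R q.1 ^ (-(2 / (p - 1)))) ^ p) ∧
        -u' q = 1 / (p - 1) * (A * ((q.2 - t₀) ^ (-(1 / (p - 1)))) ^ p) := by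
  have hp1 : 0 < p - 1 := sub_pos.2 hp
  obtain ⟨G, H, hspace, hbound⟩ := exists_isC21On_const_mul_ballDepth_rpow hR hA
    (div_pos two_pos hp1).le x₀
  have htime := (((isC21On_time t₀).mono (subset_univ {q : E × ℝ | t₀ < q.2})).const_mul_rpow
    (fun q hq => sub_pos.2 hq) A (-(1 / (p - 1)))).add_const c
  simp only [smul_zero, map_zero, add_zero, mul_one] at htime
  refine ⟨_, _, _, (hspace.mono fun q hq => hq.1).add (htime.mono fun q hq => hq.2),
    fun q hρ ht => ?_⟩
  obtain ⟨hG, hH⟩ := hbound q hρ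
  simp only [← Real.rpow_mul hρ.le, ← Real.rpow_mul (sub_pos.2 ht).le, Pi.add_apply, add_zero,
    zero_add]
  have h₁ : -(2 / (p - 1)) * ((p + 1) / 2) = -(2 / (p - 1)) - 1 := by field_simp; ring
  have h₂ : -(2 / (p - 1)) * p = -(2 / (p - 1)) - 1 - 1 := by field_simp; ring
  have h₃ : -(1 / (p - 1)) * p = -(1 / (p - 1)) - 1 := by field_simp; ring
  rw [h₁, h₂, h₃]
  exact ⟨hG, hH, by ring⟩

end BarrierDerivatives

/-! ### The gradient estimate -/

theorem mul_rpow_le_of_mul_le {A X W r : ℝ} (hA : 0 < A) (hX : 0 ≤ X) (hr : 0 ≤ r)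
    (h : A * X ≤ W) : A * X ^ r ≤ A ^ (1 - r) * W ^ r := by
  calc A * X ^ r = A ^ (1 - r) * (A * X) ^ r := by
        rw [Real.mul_rpow hA.le hX, ← mul_assoc, ← Real.rpow_add hA, sub_add_cancel,
          Real.rpow_one]
    _ ≤ A ^ (1 - r) * W ^ r := by gcongr

/-- The factor `ε` for which the derivatives of the barrier with amplitude `A` contribute at most
`ε |∇v|^(2p)` to the Bernstein inequality in dimension `n` wherever the barrier is below `|∇v|²`. -/
def barrierError (n p A : ℝ) : ℝ :=
  p * (2 * (2 / (p - 1))) * A ^ (1 - (p + 1) / 2) +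
    (4 * (2 / (p - 1)) * (2 / (p - 1) + 1) + 2 * (2 / (p - 1)) * n + 1 / (p - 1)) * A ^ (1 - p)

theorem tendsto_barrierError (n : ℝ) {p : ℝ} (hp : 1 < p) :
    Tendsto (barrierError n p) atTop (𝓝 0) := by
  have h (r : ℝ) (hr : 1 < r) : Tendsto (fun A : ℝ => A ^ (1 - r)) atTop (𝓝 0) := by
    simpa using tendsto_rpow_neg_atTop (sub_pos.2 hr)
  simpa using! ((h ((p + 1) / 2) (by linarith)).const_mul _).add ((h p hp).const_mul _)

theorem exists_two_mul_barrierError_lt_one (n : ℝ) {p : ℝ} (hp : 1 < p) :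
    ∃ A > 0, 2 * (n * barrierError n p A) < 1 := by
  have h : Tendsto (fun A => 2 * (n * barrierError n p A)) atTop (𝓝 0) := by
    simpa using ((tendsto_barrierError n hp).const_mul n).const_mul 2
  exact ((eventually_gt_atTop 0).and (h.eventually_lt_const one_pos)).exists

-- `X` and `T` stand for the powers of `ρ` and `t - t₀` in the barrier, `x` for `∇v`, and `y`, `L`,
-- `D` for the gradient, Laplacian and time derivative of the barrier.
theorem bernstein_rhs_le_barrierError {E : Type*} [NormedAddCommGroup E] [InnerProductSpace ℝ E]
    {p A X T L D n : ℝ} {x y : E} (hp : 1 < p) (hA : 0 < A) (hn : 0 ≤ n) (hX : 0 ≤ X) (hT : 0 ≤ T)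
    (hx : x ≠ 0) (hXg : A * X ≤ ‖x‖ ^ 2) (hTg : A * T ≤ ‖x‖ ^ 2)
    (hy : ‖y‖ ≤ 2 * (2 / (p - 1)) * (A * X ^ ((p + 1) / 2)))
    (hL : L ≤ (4 * (2 / (p - 1)) * (2 / (p - 1) + 1) + 2 * (2 / (p - 1)) * n) * (A * X ^ p))
    (hD : -D = 1 / (p - 1) * (A * T ^ p)) :
    p * ‖x‖ ^ (p - 2) * ⟪x, y⟫ + L - D ≤ barrierError n p A * (‖x‖ ^ 2) ^ p := by
  have : 0 < p - 1 := sub_pos.2 hp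
  have hx0 : 0 < ‖x‖ := norm_pos_iff.2 hx
  have hgrad : p * ‖x‖ ^ (p - 2) * ⟪x, y⟫ ≤
      p * (2 * (2 / (p - 1))) * A ^ (1 - (p + 1) / 2) * (‖x‖ ^ 2) ^ p := by
    have hpow : ‖x‖ ^ (p - 2) * ‖x‖ * (‖x‖ ^ 2) ^ ((p + 1) / 2) = (‖x‖ ^ 2) ^ p := by
      rw [← Real.rpow_natCast, ← Real.rpow_mul hx0.le, ← Real.rpow_mul hx0.le,
        ← Real.rpow_add_one hx0.ne', ← Real.rpow_add hx0]
      congr 1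
      push_cast
      ring
    calc p * ‖x‖ ^ (p - 2) * ⟪x, y⟫ ≤ p * ‖x‖ ^ (p - 2) * (‖x‖ * ‖y‖) := by
          gcongr
          exact real_inner_le_norm x y
      _ ≤ p * ‖x‖ ^ (p - 2) * (‖x‖ * (2 * (2 / (p - 1)) *
            (A ^ (1 - (p + 1) / 2) * (‖x‖ ^ 2) ^ ((p + 1) / 2)))) := by
          gcongr
          exact hy.trans (mul_le_mul_of_nonneg_left (mul_rpow_le_of_mul_le hA hX
            (by linarith : 0 ≤ (p + 1) / 2) hXg) (by positivity))
      _ = p * (2 * (2 / (p - 1))) * A ^ (1 - (p + 1) / 2) *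
            (‖x‖ ^ (p - 2) * ‖x‖ * (‖x‖ ^ 2) ^ ((p + 1) / 2)) := by ring
      _ = _ := by rw [hpow]
  have hXp := mul_rpow_le_of_mul_le hA hX (by linarith : 0 ≤ p) hXg
  have hTp := mul_rpow_le_of_mul_le hA hT (by linarith : 0 ≤ p) hTg
  have hL' := hL.trans (mul_le_mul_of_nonneg_left hXp (by positivity))
  have hD' := hD.trans_le (mul_le_mul_of_nonneg_left hTp (by positivity))
  rw [barrierError]
  linarith

theorem lt_two_mul_of_sub_eq_of_sq_le {W L M n v' ε : ℝ} (hW : 0 < W) (hv : v' - L = W)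
    (hM : v' ≤ M) (h : 2 * L ^ 2 ≤ n * (ε * W ^ 2)) (hε : 2 * (n * ε) < 1) : W < 2 * M := by
  by_contra! hWM
  nlinarith [mul_pos hW hW, mul_lt_mul_of_pos_right hε (mul_pos hW hW)]

theorem IsC21On.sq_norm_gradient_le_bernsteinBarrier {E : Type*} [NormedAddCommGroup E]
    [InnerProductSpace ℝ E] [FiniteDimensional ℝ E] {O : Set (E × ℝ)} {v v' : E × ℝ → ℝ}
    {G : E × ℝ → E} {H : E × ℝ → E →L[ℝ] E} {p A c M R t₀ : ℝ} {x₀ : E} (hp : 1 < p) (hA : 0 < A)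
    (hAn : 2 * (Module.finrank ℝ E * barrierError (Module.finrank ℝ E) p A) < 1) (hR : 0 < R)
    (hM : 0 ≤ M) (hc : (2 * M) ^ (2 / p) ≤ c) (hO : IsOpen O)
    (hOB : O ⊆ {q | 0 < ballDepth x₀ R q.1 ∧ t₀ < q.2}) (hv : IsC21On O v G H v')
    (heq : ∀ q ∈ O, v' q - traceCLM (H q) = ‖G q‖ ^ p) (hv'M : ∀ q ∈ O, v' q ≤ M)
    {q₀ : E × ℝ} (hq₀ : q₀ ∈ O) (hK : IsCompact
      {q | q ∈ O ∧ q.2 ≤ q₀.2 ∧ bernsteinBarrier p A c x₀ R t₀ q ≤ ‖G q‖ ^ 2}) :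
    ‖G q₀‖ ^ 2 ≤ bernsteinBarrier p A c x₀ R t₀ q₀ := by
  by_contra! hlt
  obtain ⟨Gφ, Hφ, φ', hφ, hbound⟩ := exists_isC21On_bernsteinBarrier hp hA.le hR c x₀ t₀
  obtain ⟨q, hq, hqlt, hineq⟩ :=
    hv.exists_bernstein_of_hamiltonJacobi hp hO heq (hφ.mono hOB) hK hq₀ le_rfl hlt
  obtain ⟨hρ, ht⟩ := hOB hq
  obtain ⟨hGφ, hHφ, hφ'⟩ := hbound q hρ ht
  have hX : 0 ≤ ballDepth x₀ R q.1 ^ (-(2 / (p - 1))) := Real.rpow_nonneg hρ.le _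
  have hT : 0 ≤ (q.2 - t₀) ^ (-(1 / (p - 1))) := Real.rpow_nonneg (sub_pos.2 ht).le _
  have hAX := mul_nonneg hA.le hX
  have hAT := mul_nonneg hA.le hT
  have hM' : 0 ≤ (2 * M) ^ (2 / p) := by positivity
  rw [bernsteinBarrier] at hqlt
  have hG : G q ≠ 0 := by
    intro h
    rw [h, norm_zero] at hqlt
    linarith
  have hrhs := bernstein_rhs_le_barrierError hp hA (Nat.cast_nonneg _) hX hT hG (by linarith)
    (by linarith) hGφ hHφ hφ'
  have hsq : (‖G q‖ ^ 2) ^ p = (‖G q‖ ^ p) ^ 2 := by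
    rw [← Real.rpow_natCast, ← Real.rpow_natCast, ← Real.rpow_mul (norm_nonneg _),
      ← Real.rpow_mul (norm_nonneg _), mul_comm]
  have hlt2M := lt_two_mul_of_sub_eq_of_sq_le (Real.rpow_pos_of_pos (norm_pos_iff.2 hG) p)
    (heq q hq) (hv'M q hq)
    (hineq.trans (mul_le_mul_of_nonneg_left (hsq ▸ hrhs) (Nat.cast_nonneg _))) hAn
  have hlt2M' : ‖G q‖ ^ 2 < (2 * M) ^ (2 / p) := by
    calc ‖G q‖ ^ 2 = (‖G q‖ ^ p) ^ (2 / p) := by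
          rw [← Real.rpow_mul (norm_nonneg _), mul_div_cancel₀ _ (by linarith), Real.rpow_two]
      _ < _ := Real.rpow_lt_rpow (by positivity) hlt2M (by positivity)
  linarith

theorem stmt17_general (E : Type*) [NormedAddCommGroup E] [InnerProductSpace ℝ E]
    [FiniteDimensional ℝ E] {p : ℝ} (hp : 1 < p) :
    ∃ C > (0 : ℝ), ∀ ω : Set E, IsOpen ω → ∀ x₀ : E, ∀ R > (0 : ℝ), ∀ t₀ t₁ : ℝ,
    ∀ (v : E × ℝ → ℝ) (G : E × ℝ → E) (H : E × ℝ → E →L[ℝ] E) (v' : E × ℝ → ℝ),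
    ContinuousOn G ((closure (ball x₀ R) ∩ closure ω) ×ˢ Icc t₀ t₁) →
    IsC21On ((ball x₀ R ∩ ω) ×ˢ Ioo t₀ t₁) v G H v' →
    (∀ q ∈ (ball x₀ R ∩ ω) ×ˢ Ioo t₀ t₁, v' q - traceCLM (H q) = ‖G q‖ ^ p) →
    ∀ M N : ℝ, 0 ≤ M → 0 ≤ N →
    (∀ q ∈ (ball x₀ R ∩ frontier ω) ×ˢ Ioo t₀ t₁, ‖G q‖ ≤ N) →
    (∀ q ∈ (ball x₀ R ∩ ω) ×ˢ Ioo t₀ t₁, v' q ≤ M) →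
    ∀ q ∈ (ball x₀ (R / 2) ∩ ω) ×ˢ Ioo t₀ t₁,
      ‖G q‖ ≤ C * (N + M ^ (1 / p) + R ^ (-(1 / (p - 1))) +
        (q.2 - t₀) ^ (-(1 / (2 * (p - 1))))) := by
  obtain ⟨A, hA, hAn⟩ := exists_two_mul_barrierError_lt_one (Module.finrank ℝ E) hp
  refine ⟨√(1 + 2 ^ (2 / p) + A * 2 ^ (2 / (p - 1)) + A), by positivity, ?_⟩
  intro ω hω x₀ R hR t₀ t₁ v G H v' hG hv heq M N hM hN hGN hv'M q ⟨⟨hx, hxω⟩, ht⟩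
  have hO : IsOpen ((ball x₀ R ∩ ω) ×ˢ Ioo t₀ t₁) := (isOpen_ball.inter hω).prod isOpen_Ioo
  have hK := isCompact_setOf_bernsteinBarrier_le_sq_norm (c := N ^ 2 + (2 * M) ^ (2 / p)) hp hA hR
    hω hG ht.2 hGN (le_add_of_nonneg_right (by positivity))
  have hbarrier := hv.sq_norm_gradient_le_bernsteinBarrier hp hA hAn hR hM
    (le_add_of_nonneg_left (sq_nonneg N)) hO
    (fun q hq => ⟨(ballDepth_pos_iff hR).2 hq.1.1, hq.2.1⟩) heq hv'M
    ⟨⟨ball_subset_ball (half_le_self hR.le) hx, hxω⟩, ht⟩ hK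
  have hτ := sub_pos.2 ht.1
  refine le_of_sq_le_sq ?_ (by positivity)
  rw [mul_pow, Real.sq_sqrt (by positivity)]
  exact hbarrier.trans (bernsteinBarrier_le hp hA.le hR hM hN hx ht.1)

theorem stmt17 {n : ℕ} (hn : 1 ≤ n) (p : ℝ) (hp : 2 < p) :
    ∃ C > (0 : ℝ),
    ∀ ω : Set (EuclideanSpace ℝ (Fin n)), IsOpen ω →
    ∀ x₀ ∈ frontier ω, ∀ R > (0 : ℝ), ∀ t₀ t₁ : ℝ, t₀ < t₁ →
    ∀ (v : EuclideanSpace ℝ (Fin n) → ℝ → ℝ) (Gv : EuclideanSpace ℝ (Fin n) → ℝ → EuclideanSpace ℝ (Fin n)) (Hv : EuclideanSpace ℝ (Fin n) → ℝ → (EuclideanSpace ℝ (Fin n) →L[ℝ] EuclideanSpace ℝ (Fin n)))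
      (v' : EuclideanSpace ℝ (Fin n) → ℝ → ℝ),
    -- v, its first and second spatial derivatives and its first time derivative are
    -- continuous on (B̄_R(x₀) ∩ ω̄) × [t₀, t₁]
    ContinuousOn (fun q : EuclideanSpace ℝ (Fin n) × ℝ => (v q.1 q.2, Gv q.1 q.2, Hv q.1 q.2, v' q.1 q.2))
      ((closure (ball x₀ R) ∩ closure ω) ×ˢ Icc t₀ t₁) →
    (∀ t ∈ Icc t₀ t₁, ∀ x ∈ closure (ball x₀ R) ∩ closure ω,
      HasGradientWithinAt (fun y => v y t) (Gv x t) (closure (ball x₀ R) ∩ closure ω) x) →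
    (∀ t ∈ Icc t₀ t₁, ∀ x ∈ closure (ball x₀ R) ∩ closure ω,
      HasFDerivWithinAt (fun y => Gv y t) (Hv x t) (closure (ball x₀ R) ∩ closure ω) x) →
    (∀ x ∈ closure (ball x₀ R) ∩ closure ω, ∀ t ∈ Icc t₀ t₁,
      HasDerivWithinAt (fun s => v x s) (v' x t) (Icc t₀ t₁) t) →
    -- vₜ - Δv = |∇v|^p in (B_R(x₀) ∩ ω) × (t₀, t₁)
    (∀ x ∈ ball x₀ R ∩ ω, ∀ t ∈ Ioo t₀ t₁,
      v' x t - ∑ i : Fin n, ⟪Hv x t (EuclideanSpace.single i (1 : ℝ)),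
        EuclideanSpace.single i (1 : ℝ)⟫ = ‖Gv x t‖ ^ p) →
    -- v = 0 on (B_R(x₀) ∩ ∂ω) × (t₀, t₁)
    (∀ b ∈ ball x₀ R ∩ frontier ω, ∀ t ∈ Ioo t₀ t₁, v b t = 0) →
    ∀ M N : ℝ, 0 < M → 0 < N →
    -- |∇v| ≤ N on (B_R(x₀) ∩ ∂ω) × [t₀, t₁]
    (∀ b ∈ ball x₀ R ∩ frontier ω, ∀ t ∈ Icc t₀ t₁, ‖Gv b t‖ ≤ N) →
    -- |vₜ| ≤ M in (B_R(x₀) ∩ ω) × [t₀, t₁]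
    (∀ x ∈ ball x₀ R ∩ ω, ∀ t ∈ Icc t₀ t₁, |v' x t| ≤ M) →
    -- conclusion
    ∀ x ∈ ball x₀ (R / 2) ∩ ω, ∀ t ∈ Ioo t₀ t₁,
      ‖Gv x t‖ ≤ C * (N + M ^ (1 / p) + R ^ (-(1 / (p - 1))) +
        (t - t₀) ^ (-(1 / (2 * (p - 1))))) := by
  obtain ⟨C, hC, h⟩ := stmt17_general (EuclideanSpace ℝ (Fin n)) (one_lt_two.trans hp)
  refine ⟨C, hC, ?_⟩
  intro ω hω x₀ _ R hR t₀ t₁ _ v Gv Hv v' hcont hGv hHv hv' heq _ M N hM hN hGN hv'M x hx t ht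
  refine h ω hω x₀ R hR t₀ t₁ _ _ _ _ hcont.snd.fst
    (isC21On_of_hasDerivWithinAt (isOpen_ball.inter hω)
      (inter_subset_inter subset_closure subset_closure) hcont hGv hHv hv')
    (fun q hq => ?_) M N hM.le hN.le (fun q hq => hGN q.1 hq.1 q.2 (Ioo_subset_Icc_self hq.2))
    (fun q hq => (le_abs_self _).trans (hv'M q.1 hq.1 q.2 (Ioo_subset_Icc_self hq.2)))
    (x, t) ⟨hx, ht⟩
  simpa [traceCLM_eq_sum_inner (EuclideanSpace.basisFun (Fin n) ℝ), real_inner_comm] using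
    heq q.1 hq.1 q.2 hq.2
end
end
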